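/- arXiv:2412.03444 — 3 statements merged into one kernel-verified Lean document; each statement's English description precedes it below -/
import Mathlib

section
/- Let ρ and σ be positive definite d×d density matrices, let α ∈ (1,∞) and z ∈ (0,∞). Then the maximum of F_{α,z}(ρ, UσU*) over all d×d unitary matrices U equals F_α^C(λ↓(ρ), λ↑(σ)), and this maximum is attained by some unitary U. -/
open Matrix
open scoped ComplexOrder

/-- Real power of a (Hermitian) matrix via functional calculus on eigenvalues,
with `(0:ℝ) ^ t = 0` for `t ≠ 0`. Returns `0` on non-Hermitian input. -/
noncomputable def mpow {d : ℕ} (A : Matrix (Fin d) (Fin d) ℂ) (t : ℝ) :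
    Matrix (Fin d) (Fin d) ℂ :=
  if hA : A.IsHermitian then
    (hA.eigenvectorUnitary : Matrix (Fin d) (Fin d) ℂ) *
      Matrix.diagonal (fun i => ((hA.eigenvalues i ^ t : ℝ) : ℂ)) *
      (star (hA.eigenvectorUnitary : Matrix (Fin d) (Fin d) ℂ))
  else 0

/-- The quantum α-z-fidelity
`F_{α,z}(ρ,σ) = (Tr[(σ^{(1-α)/(2z)} ρ^{α/z} σ^{(1-α)/(2z)})^z])^{1/α}`. -/
noncomputable def Faz {d : ℕ} (ρ σ : Matrix (Fin d) (Fin d) ℂ) (α z : ℝ) : ℝ :=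
  ((mpow (mpow σ ((1 - α) / (2 * z)) * mpow ρ (α / z) * mpow σ ((1 - α) / (2 * z))) z).trace.re)
    ^ (1 / α)

/-- The classical α-fidelity `F_α^C(p,q) = (Σ_i p_i^α q_i^{1-α})^{1/α}`. -/
noncomputable def FazC {d : ℕ} (p q : Fin d → ℝ) (α : ℝ) : ℝ :=
  (∑ i, p i ^ α * q i ^ (1 - α)) ^ (1 / α)

/-- The vector `p` rearranged in increasing order. -/
noncomputable def sortUp {d : ℕ} (p : Fin d → ℝ) : Fin d → ℝ :=
  p ∘ Tuple.sort p

/-- The vector `p` rearranged in decreasing order. -/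
noncomputable def sortDown {d : ℕ} (p : Fin d → ℝ) : Fin d → ℝ :=
  fun i => sortUp p i.rev

/-- `λ↑(A)`: the eigenvalues of a Hermitian matrix in increasing order. -/
noncomputable def eigUp {d : ℕ} {A : Matrix (Fin d) (Fin d) ℂ} (hA : A.IsHermitian) :
    Fin d → ℝ := sortUp hA.eigenvalues

/-- `λ↓(A)`: the eigenvalues of a Hermitian matrix in decreasing order. -/
noncomputable def eigDown {d : ℕ} {A : Matrix (Fin d) (Fin d) ℂ} (hA : A.IsHermitian) :
    Fin d → ℝ := sortDown hA.eigenvalues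


/-- conjugated real diagonal -/
noncomputable def cj {d : ℕ} (W : Matrix (Fin d) (Fin d) ℂ) (v : Fin d → ℝ) :
    Matrix (Fin d) (Fin d) ℂ :=
  W * Matrix.diagonal (fun i => ((v i : ℝ) : ℂ)) * star W

lemma cj_mul {d : ℕ} {W : Matrix (Fin d) (Fin d) ℂ} (hW : W ∈ Matrix.unitaryGroup (Fin d) ℂ)
    (v w : Fin d → ℝ) : cj W v * cj W w = cj W (fun i => v i * w i) := by
  have h : star W * W = 1 := Matrix.mem_unitaryGroup_iff'.1 hW
  unfold cj
  calc _ = W * Matrix.diagonal (fun i => ((v i : ℝ) : ℂ)) * (star W * W) *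
      Matrix.diagonal (fun i => ((w i : ℝ) : ℂ)) * star W := by simp only [Matrix.mul_assoc]
    _ = _ := by
      rw [h, Matrix.mul_one, Matrix.mul_assoc W, Matrix.diagonal_mul_diagonal]
      simp

lemma cj_one {d : ℕ} {W : Matrix (Fin d) (Fin d) ℂ} (hW : W ∈ Matrix.unitaryGroup (Fin d) ℂ) :
    cj W (fun _ => 1) = 1 := by
  simp [cj, Matrix.mem_unitaryGroup_iff.1 hW]

lemma cj_conj {d : ℕ} (U W : Matrix (Fin d) (Fin d) ℂ) (v : Fin d → ℝ) :
    U * cj W v * star U = cj (U * W) v := by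
  simp [cj, Matrix.mul_assoc]

lemma cj_herm {d : ℕ} (W : Matrix (Fin d) (Fin d) ℂ) (v : Fin d → ℝ) :
    (cj W v).IsHermitian := by
  unfold cj Matrix.IsHermitian
  simp [Matrix.star_eq_conjTranspose, Matrix.mul_assoc, Matrix.diagonal_conjTranspose]
  have : (star fun i => ((v i : ℝ) : ℂ)) = fun i => ((v i : ℝ) : ℂ) := by
    ext i; simp
  rw [this]

noncomputable def cjHom {d : ℕ} {W : Matrix (Fin d) (Fin d) ℂ}
    (hW : W ∈ Matrix.unitaryGroup (Fin d) ℂ) : (Fin d → ℝ) →ₐ[ℝ] Matrix (Fin d) (Fin d) ℂ where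
  toFun v := cj W v
  map_one' := cj_one hW
  map_mul' v w := (cj_mul hW v w).symm
  map_zero' := by simp [cj]
  map_add' v w := by
    have : (Matrix.diagonal fun i => (((v + w) i : ℝ) : ℂ)) =
      Matrix.diagonal (fun i => ((v i : ℝ) : ℂ)) + Matrix.diagonal (fun i => ((w i : ℝ) : ℂ)) := by
      simp
    simp only [cj]
    rw [this]
    rw [Matrix.mul_add, Matrix.add_mul]
  commutes' r := by
    have : (Matrix.diagonal fun i => (((algebraMap ℝ (Fin d → ℝ) r) i : ℝ) : ℂ)) =
      (r : ℂ) • (1 : Matrix (Fin d) (Fin d) ℂ) := by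
      ext i j; simp [Matrix.diagonal_apply, Matrix.one_apply]
    simp only [cj]
    rw [this]
    simp [Matrix.mem_unitaryGroup_iff.1 hW, Algebra.algebraMap_eq_smul_one]

lemma cfc_cj {d : ℕ} {W : Matrix (Fin d) (Fin d) ℂ} (hW : W ∈ Matrix.unitaryGroup (Fin d) ℂ)
    (v : Fin d → ℝ) (f : ℝ → ℝ) : cfc f (cj W v) = cj W (fun i => f (v i)) := by
  classical
  have hH := cj_herm W v
  set s : Finset ℝ := Finset.univ.image v ∪ Finset.univ.image hH.eigenvalues with hs
  set p := Lagrange.interpolate s id f with hp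
  have hpe : ∀ x ∈ s, p.eval x = f x := fun x hx =>
    Lagrange.eval_interpolate_at_node (v := id) f (Set.injOn_id _) hx
  have h1 : cfc f (cj W v) = cfc p.eval (cj W v) := by
    apply cfc_congr
    intro x hx
    rw [hH.spectrum_real_eq_range_eigenvalues] at hx
    obtain ⟨i, rfl⟩ := hx
    exact (hpe _ (by simp [hs])).symm
  rw [h1]
  refine (cfc_polynomial p _ hH).trans ?_
  have : cj W v = cjHom hW v := rfl
  rw [this, Polynomial.aeval_algHom_apply]
  show cj W _ = _
  congr 1
  ext i
  have h2 := hpe (v i) (by simp [hs])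
  rw [← h2]
  have := Polynomial.aeval_algHom_apply (Pi.evalAlgHom ℝ (fun _ : Fin d => ℝ) i) v p
  simp only [Pi.evalAlgHom_apply] at this
  rw [← this]; simp

lemma mpow_eq_cfc {d : ℕ} (A : Matrix (Fin d) (Fin d) ℂ) (t : ℝ) :
    mpow A t = cfc (fun x : ℝ => x ^ t) A := by
  unfold mpow
  split_ifs with hA
  · rw [hA.cfc_eq, Matrix.IsHermitian.cfc, Unitary.conjStarAlgAut_apply]
    rfl
  · rw [cfc_apply_of_not_predicate]
    exact hA

lemma mpow_cj {d : ℕ} {W : Matrix (Fin d) (Fin d) ℂ} (hW : W ∈ Matrix.unitaryGroup (Fin d) ℂ)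
    (v : Fin d → ℝ) (t : ℝ) : mpow (cj W v) t = cj W (fun i => v i ^ t) := by
  rw [mpow_eq_cfc, cfc_cj hW]

lemma herm_eq_cj {d : ℕ} {A : Matrix (Fin d) (Fin d) ℂ} (hA : A.IsHermitian) :
    A = cj (hA.eigenvectorUnitary : Matrix (Fin d) (Fin d) ℂ) hA.eigenvalues := by
  conv_lhs => rw [hA.spectral_theorem, Unitary.conjStarAlgAut_apply]
  rfl

lemma cj_posDef {d : ℕ} {W : Matrix (Fin d) (Fin d) ℂ} (hW : W ∈ Matrix.unitaryGroup (Fin d) ℂ)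
    (v : Fin d → ℝ) (hv : ∀ i, 0 < v i) : (cj W v).PosDef := by
  have h : (Matrix.diagonal (fun i => ((v i : ℝ) : ℂ))).PosDef :=
    Matrix.PosDef.diagonal (fun i => by exact_mod_cast hv i)
  have hu : IsUnit W := (Unitary.isUnit_coe (U := ⟨W, hW⟩))
  unfold cj
  rw [Matrix.star_eq_conjTranspose]
  exact (Matrix.IsUnit.posDef_star_right_conjugate_iff hu).2 h

lemma posDef_cj {d : ℕ} {A : Matrix (Fin d) (Fin d) ℂ} (hA : A.PosDef) :
    ∃ W ∈ Matrix.unitaryGroup (Fin d) ℂ, ∃ v : Fin d → ℝ, (∀ i, 0 < v i) ∧ A = cj W v :=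
  ⟨_, hA.1.eigenvectorUnitary.2, _, hA.eigenvalues_pos, herm_eq_cj hA.1⟩

lemma trace_cj {d : ℕ} {W : Matrix (Fin d) (Fin d) ℂ} (hW : W ∈ Matrix.unitaryGroup (Fin d) ℂ)
    (v : Fin d → ℝ) : (cj W v).trace.re = ∑ i, v i := by
  unfold cj
  rw [Matrix.trace_mul_comm, ← Matrix.mul_assoc, Matrix.mem_unitaryGroup_iff'.1 hW]
  simp [Matrix.trace]

lemma trace_cj_cj {d : ℕ} (W V : Matrix (Fin d) (Fin d) ℂ) (f h : Fin d → ℝ) :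
    (cj W f * cj V h).trace.re =
      ∑ i, ∑ j, Complex.normSq ((star W * V) i j) * (f i * h j) := by
  set T := star W * V with hT
  have hT2 : star T = star V * W := by simp [hT]
  have : (cj W f * cj V h).trace = (Matrix.diagonal (fun i => ((f i : ℝ) : ℂ)) * T *
      Matrix.diagonal (fun i => ((h i : ℝ) : ℂ)) * star T).trace := by
    unfold cj
    rw [hT2, hT]
    rw [show W * Matrix.diagonal (fun i => ((f i : ℝ) : ℂ)) * star W *
      (V * Matrix.diagonal (fun i => ((h i : ℝ) : ℂ)) * star V) =
      W * (Matrix.diagonal (fun i => ((f i : ℝ) : ℂ)) * star W *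
      (V * Matrix.diagonal (fun i => ((h i : ℝ) : ℂ)) * star V)) by simp only [Matrix.mul_assoc],
      Matrix.trace_mul_comm]
    simp only [Matrix.mul_assoc]
  rw [this]
  simp only [Matrix.trace, Matrix.diag_apply]
  rw [Complex.re_sum]
  refine Finset.sum_congr rfl fun i _ => ?_
  rw [Matrix.mul_apply, Complex.re_sum]
  refine Finset.sum_congr rfl fun j _ => ?_
  rw [Matrix.mul_diagonal, Matrix.diagonal_mul, Matrix.star_apply]
  have : (f i : ℂ) * T i j * (h j : ℂ) * star (T i j) =
     ((Complex.normSq (T i j) * (f i * h j) : ℝ) : ℂ) := by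
    push_cast
    rw [Complex.normSq_eq_conj_mul_self]
    simp only [RCLike.star_def]
    ring
  rw [this, Complex.ofReal_re]

lemma unitary_row {d : ℕ} {T : Matrix (Fin d) (Fin d) ℂ} (hT : T ∈ Matrix.unitaryGroup (Fin d) ℂ)
    (i : Fin d) : ∑ j, Complex.normSq (T i j) = 1 := by
  have h := congrFun (congrFun (Matrix.mem_unitaryGroup_iff.1 hT) i) i
  rw [Matrix.mul_apply, Matrix.one_apply_eq] at h
  have h2 : ((∑ j, Complex.normSq (T i j) : ℝ) : ℂ) = 1 := by
    rw [← h]; push_cast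
    refine Finset.sum_congr rfl fun j _ => ?_
    rw [Complex.normSq_eq_conj_mul_self, Matrix.star_apply, mul_comm]; rfl
  exact_mod_cast h2

lemma unitary_col {d : ℕ} {T : Matrix (Fin d) (Fin d) ℂ} (hT : T ∈ Matrix.unitaryGroup (Fin d) ℂ)
    (j : Fin d) : ∑ i, Complex.normSq (T i j) = 1 := by
  have := unitary_row (Unitary.star_mem hT) j
  simpa [Matrix.star_apply] using this

lemma scalar_ineq {z m n : ℝ} (hz : 0 < z) (hm : 0 < m) (hn : 0 < n) :
    (1 - z - |1 - z|) * m ^ z + (z + 2 * |1 - z|) * (m ^ (z - 1) * n)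
      - |1 - z| * (m ^ (z - 2) * n ^ (2:ℝ)) ≤ n ^ z := by
  have key : ∀ x : ℝ, 0 < x → 1 + z * (x - 1) - |1 - z| * (x - 1) ^ 2 ≤ x ^ z := by
    intro x hx
    rcases le_total 1 z with h | h
    · have := one_add_mul_self_le_rpow_one_add (s := x - 1) (by linarith) h
      have h2 : 0 ≤ |1 - z| * (x - 1) ^ 2 := by positivity
      rw [show 1 + (x - 1) = x by ring] at this
      linarith
    · rw [abs_of_nonneg (by linarith)]
      have h1 := rpow_one_add_le_one_add_mul_self (s := x - 1) (by linarith) (p := 1 - z)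
        (by linarith) (by linarith)
      rw [show 1 + (x - 1) = x by ring] at h1
      have h2 : x ^ z * x ^ (1 - z) = x := by
        rw [← Real.rpow_add hx]; simp
      have h3 : 0 < x ^ (1 - z) := Real.rpow_pos_of_pos hx _
      have h4 : 0 < x ^ z := Real.rpow_pos_of_pos hx _
      -- x^z = x / x^{1-z} ≥ x / (1+(1-z)(x-1)) ≥ x (1-(1-z)(x-1))
      set y := (1 - z) * (x - 1) with hy
      have h5 : 0 < 1 + y := by linarith
      have h6 : x ≤ x ^ z * (1 + y) := by
        calc x = x ^ z * x ^ (1 - z) := h2.symm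
          _ ≤ _ := by gcongr
      have h7 : x * (1 - y) * (1 + y) ≤ x ^ z * (1 + y) := by nlinarith [mul_nonneg hx.le (sq_nonneg y)]
      have h8 : x * (1 - y) ≤ x ^ z := le_of_mul_le_mul_right h7 h5
      rw [hy] at h8
      nlinarith
  have := key (n / m) (by positivity)
  rw [Real.div_rpow hn.le hm.le, le_div_iff₀ (Real.rpow_pos_of_pos hm _)] at this
  refine le_trans (le_of_eq ?_) this
  rw [Real.rpow_sub hm, Real.rpow_sub hm]
  simp only [Real.rpow_one, Real.rpow_two]
  field_simp
  ring

lemma klein {d : ℕ} {M N : Matrix (Fin d) (Fin d) ℂ} (hM : M.PosDef) (hN : N.PosDef)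
    {z : ℝ} (hz : 0 < z) :
    (1 - z - |1 - z|) * (mpow M z).trace.re + (z + 2 * |1 - z|) * (mpow M (z - 1) * N).trace.re
      - |1 - z| * (mpow M (z - 2) * (N * N)).trace.re ≤ (mpow N z).trace.re := by
  obtain ⟨W, hW, m, hm, rfl⟩ := posDef_cj hM
  obtain ⟨V, hV, n, hn, rfl⟩ := posDef_cj hN
  rw [cj_mul hV, mpow_cj hW, mpow_cj hW, mpow_cj hW, mpow_cj hV, trace_cj_cj, trace_cj_cj,
    trace_cj hW, trace_cj hV]
  have hT : star W * V ∈ Matrix.unitaryGroup (Fin d) ℂ := mul_mem (Unitary.star_mem hW) hV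
  set T := star W * V
  have e1 : ∑ i, m i ^ z = ∑ i, ∑ j, Complex.normSq (T i j) * m i ^ z := by
    refine Finset.sum_congr rfl fun i _ => ?_
    rw [← Finset.sum_mul, unitary_row hT, one_mul]
  have e2 : ∑ j, n j ^ z = ∑ i, ∑ j, Complex.normSq (T i j) * n j ^ z := by
    rw [Finset.sum_comm]
    refine Finset.sum_congr rfl fun i _ => ?_
    rw [← Finset.sum_mul, unitary_col hT, one_mul]
  rw [e1, e2]
  simp only [Finset.mul_sum]
  simp only [← Finset.sum_add_distrib, ← Finset.sum_sub_distrib]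
  refine Finset.sum_le_sum fun i _ => Finset.sum_le_sum fun j _ => ?_
  have := mul_le_mul_of_nonneg_left (scalar_ineq hz (hm i) (hn j)) (Complex.normSq_nonneg (T i j))
  rw [Real.rpow_two] at this
  refine le_trans (le_of_eq ?_) this
  ring

lemma exp_cj {d : ℕ} {W : Matrix (Fin d) (Fin d) ℂ} (hW : W ∈ Matrix.unitaryGroup (Fin d) ℂ)
    (v : Fin d → ℝ) : NormedSpace.exp (cj W v) = cj W (fun i => Real.exp (v i)) := by
  have hu : IsUnit W := (Unitary.isUnit_coe (U := ⟨W, hW⟩))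
  have hinv : W⁻¹ = star W := Matrix.inv_eq_right_inv (Matrix.mem_unitaryGroup_iff.1 hW)
  unfold cj
  rw [← hinv, Matrix.exp_conj _ _ hu, Matrix.exp_diagonal]
  congr 3
  ext i
  simp [Complex.exp_eq_exp_ℂ, Pi.coe_exp]

lemma mpow_exp {d : ℕ} {L : Matrix (Fin d) (Fin d) ℂ} (hL : L.IsHermitian) (z : ℝ) :
    mpow (NormedSpace.exp L) z = NormedSpace.exp ((z : ℂ) • L) := by
  have hW := hL.eigenvectorUnitary.2
  rw [herm_eq_cj hL]
  set W := (hL.eigenvectorUnitary : Matrix (Fin d) (Fin d) ℂ)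
  have : (z : ℂ) • cj W hL.eigenvalues = cj W (fun i => z * hL.eigenvalues i) := by
    unfold cj
    rw [← Matrix.smul_mul, ← Matrix.mul_smul, ← Matrix.diagonal_smul]
    congr 3
    ext i; simp
  rw [this, exp_cj hW, exp_cj hW, mpow_cj hW]
  congr 1
  ext i
  rw [← Real.exp_mul, mul_comm]

lemma exists_log {d : ℕ} {P : Matrix (Fin d) (Fin d) ℂ} (hP : P.PosDef) :
    (cfc Real.log P).IsHermitian ∧ NormedSpace.exp (cfc Real.log P) = P := by
  obtain ⟨W, hW, m, hm, rfl⟩ := posDef_cj hP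
  rw [cfc_cj hW]
  refine ⟨cj_herm _ _, ?_⟩
  rw [exp_cj hW]
  simp [Real.exp_log (hm _)]

lemma mpow_mul_of_commute {d : ℕ} {P Q : Matrix (Fin d) (Fin d) ℂ} (hP : P.PosDef) (hQ : Q.PosDef)
    (h : Commute P Q) (z : ℝ) : mpow (P * Q) z = mpow P z * mpow Q z := by
  obtain ⟨h1, h2⟩ := exists_log hP
  obtain ⟨h3, h4⟩ := exists_log hQ
  have hc : Commute (cfc Real.log P) (cfc Real.log Q) :=
    ((h.cfc_real Real.log).symm.cfc_real Real.log).symm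
  set L1 := cfc Real.log P
  set L2 := cfc Real.log Q
  rw [← h2, ← h4, ← Matrix.exp_add_of_commute _ _ hc, mpow_exp h1, mpow_exp h3,
    mpow_exp (h1.add h3), smul_add, Matrix.exp_add_of_commute]
  exact (hc.smul_left _).smul_right _

lemma commute_of_mpow {d : ℕ} {P Q : Matrix (Fin d) (Fin d) ℂ} (hP : P.PosDef) {z : ℝ} (hz : z ≠ 0)
    (h : Commute (mpow P z) Q) : Commute P Q := by
  have : P = mpow (mpow P z) z⁻¹ := by
    obtain ⟨W, hW, m, hm, rfl⟩ := posDef_cj hP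
    rw [mpow_cj hW, mpow_cj hW]
    congr 1
    ext i
    rw [Real.rpow_rpow_inv (hm i).le hz]
  rw [this, mpow_eq_cfc _ z⁻¹]
  exact h.cfc_real _

lemma isCompact_unitary (d : ℕ) :
    IsCompact {U : Matrix (Fin d) (Fin d) ℂ | U ∈ Matrix.unitaryGroup (Fin d) ℂ} := by
  have hb : IsCompact (Set.univ.pi fun _ : Fin d => Set.univ.pi fun _ : Fin d =>
      Metric.closedBall (0 : ℂ) 1) :=
    isCompact_univ_pi fun _ => isCompact_univ_pi fun _ => isCompact_closedBall _ _
  refine IsCompact.of_isClosed_subset (X := Matrix (Fin d) (Fin d) ℂ) hb ?_ ?_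
  · simp only [Matrix.mem_unitaryGroup_iff]
    exact isClosed_eq (by fun_prop) continuous_const
  · intro U hU i _ j _
    simpa using entry_norm_bound_of_unitary hU i j

open scoped Matrix.Norms.L2Operator in
lemma continuous_mpow {d : ℕ} {X : Type*} [TopologicalSpace X] (f : X → Matrix (Fin d) (Fin d) ℂ)
    (hf : Continuous f) (hh : ∀ x, (f x).IsHermitian) {z : ℝ} (hz : 0 < z) :
    Continuous (fun x => mpow (f x) z) := by
  simp only [mpow_eq_cfc]
  exact Continuous.cfc_of_mem_nhdsSet (s := Set.univ) (p := IsSelfAdjoint) _ Filter.univ_mem hf hh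
    (Real.continuous_rpow_const hz.le).continuousOn

lemma sXs_posDef {d : ℕ} {S X : Matrix (Fin d) (Fin d) ℂ} (hS : S.PosDef) (hX : X.PosDef) :
    (S * X * S).PosDef := by
  have := (Matrix.IsUnit.posDef_star_right_conjugate_iff hS.isUnit (x := X)).2 hX
  rwa [Matrix.star_eq_conjTranspose, hS.1.eq] at this

lemma conj_posDef {d : ℕ} {U X : Matrix (Fin d) (Fin d) ℂ}
    (hU : U ∈ Matrix.unitaryGroup (Fin d) ℂ) (hX : X.PosDef) :
    (U * X * star U).PosDef := by
  have hu : IsUnit U := (Unitary.isUnit_coe (U := ⟨U, hU⟩))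
  exact (Matrix.IsUnit.posDef_star_right_conjugate_iff hu (x := X)).2 hX

lemma exists_max {d : ℕ} {S A : Matrix (Fin d) (Fin d) ℂ} (hS : S.PosDef) (hA : A.PosDef)
    {z : ℝ} (hz : 0 < z) :
    ∃ U ∈ Matrix.unitaryGroup (Fin d) ℂ, ∀ V ∈ Matrix.unitaryGroup (Fin d) ℂ,
      (mpow (S * (V * A * star V) * S) z).trace.re ≤ (mpow (S * (U * A * star U) * S) z).trace.re := by
  have hc : Continuous fun V : Matrix (Fin d) (Fin d) ℂ =>
      (mpow (S * (V * A * star V) * S) z).trace.re := by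
    have hf : Continuous fun V : Matrix (Fin d) (Fin d) ℂ => S * (V * A * star V) * S :=
      (continuous_const.matrix_mul ((continuous_id.matrix_mul continuous_const).matrix_mul
        continuous_star)).matrix_mul continuous_const
    have hh : ∀ V : Matrix (Fin d) (Fin d) ℂ, (S * (V * A * star V) * S).IsHermitian := by
      intro V
      have h1 := Matrix.isHermitian_mul_mul_conjTranspose S
        (Matrix.isHermitian_mul_mul_conjTranspose V hA.1)
      rwa [hS.1.eq] at h1
    have h2 := continuous_mpow _ hf hh hz
    exact Complex.continuous_re.comp h2.matrix_trace
  obtain ⟨U, hU, h⟩ := (isCompact_unitary d).exists_isMaxOn ⟨1, one_mem (Matrix.unitaryGroup (Fin d) ℂ)⟩ hc.continuousOn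
  exact ⟨U, hU, fun V hV => h hV⟩

lemma eq_zero_of_trace {d : ℕ} {K : Matrix (Fin d) (Fin d) ℂ} (h : (star K * K).trace.re = 0) :
    K = 0 := by
  rw [Matrix.star_eq_conjTranspose] at h
  have hp := (Matrix.posSemidef_conjTranspose_mul_self K).trace_nonneg
  rw [Complex.nonneg_iff] at hp
  exact Matrix.trace_conjTranspose_mul_self_eq_zero_iff.1 (Complex.ext h hp.2.symm)

lemma mpow_sub_mul {d : ℕ} {M : Matrix (Fin d) (Fin d) ℂ} (hM : M.PosDef) (z : ℝ) :
    mpow M (z - 1) * M = mpow M z ∧ M * mpow M (z - 1) = mpow M z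
     := by
  obtain ⟨W, hW, m, hm, rfl⟩ := posDef_cj hM
  rw [mpow_cj hW, mpow_cj hW, cj_mul hW, cj_mul hW]
  constructor <;> congr 1 <;> ext i <;> rw [Real.rpow_sub (hm i), Real.rpow_one] <;>
    field_simp [(hm i).ne']

open scoped Matrix.Norms.L2Operator in
lemma critical {d : ℕ} {S X : Matrix (Fin d) (Fin d) ℂ} (hS : S.PosDef) (hX : X.PosDef)
    {z : ℝ} (hz : 0 < z)
    (hmax : ∀ V ∈ Matrix.unitaryGroup (Fin d) ℂ,
      (mpow (S * (V * X * star V) * S) z).trace.re ≤ (mpow (S * X * S) z).trace.re)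
    (K : Matrix (Fin d) (Fin d) ℂ) (hK : star K = -K) :
    (mpow (S * X * S) (z - 1) * (S * (K * X - X * K) * S)).trace.re = 0 := by
  have hM : (S * X * S).PosDef := sXs_posDef hS hX
  obtain ⟨M, hMdef⟩ : ∃ M, M = S * X * S := ⟨_, rfl⟩
  rw [← hMdef] at hM hmax ⊢
  set C := |1 - z|
  let E : ℝ → Matrix (Fin d) (Fin d) ℂ := fun t => NormedSpace.exp (t • K)
  let E' : ℝ → Matrix (Fin d) (Fin d) ℂ := fun t => NormedSpace.exp (t • (-K))
  have hE' : ∀ t, star (E t) = E' t := by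
    intro t
    simp only [E, E']
    rw [NormedSpace.star_exp]
    simp [hK]
  have hEu : ∀ t, E t ∈ Matrix.unitaryGroup (Fin d) ℂ := by
    intro t
    rw [Matrix.mem_unitaryGroup_iff, hE']
    simp only [E, E']
    rw [← Matrix.exp_add_of_commute]
    · simp
    · simp
  have dE : HasDerivAt E K 0 := by
    have := hasDerivAt_exp_smul_const (𝕂 := ℝ) K (0:ℝ)
    simpa using this
  have dE' : HasDerivAt E' (-K) 0 := by
    have := hasDerivAt_exp_smul_const (𝕂 := ℝ) (-K) (0:ℝ)
    simpa only [zero_smul, NormedSpace.exp_zero, one_mul] using this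
  let N : ℝ → Matrix (Fin d) (Fin d) ℂ := fun t => S * (E t * X * E' t) * S
  have E0 : E 0 = 1 := by simp [E]
  have E0' : E' 0 = 1 := by simp [E']
  have N0 : N 0 = M := by simp [N, E0, E0', hMdef]
  obtain ⟨D, hD⟩ : ∃ D, D = S * (K * X - X * K) * S := ⟨_, rfl⟩
  rw [← hD]
  have dN : HasDerivAt N D 0 := by
    have := (((dE.mul_const X).mul dE').const_mul S).mul_const S
    have e : D = S * (K * X * E' 0 + E 0 * X * -K) * S := by
      rw [hD, E0, E0', Matrix.mul_one, Matrix.one_mul, Matrix.mul_neg, sub_eq_add_neg]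
    rw [e]
    exact this
  have dtr : ∀ (G : Matrix (Fin d) (Fin d) ℂ) (F : ℝ → Matrix (Fin d) (Fin d) ℂ) F',
      HasDerivAt F F' 0 → HasDerivAt (fun t => (G * F t).trace.re) (G * F').trace.re 0 := by
    intro G F F' hF
    let l : Matrix (Fin d) (Fin d) ℂ →ₗ[ℝ] ℝ :=
      Complex.reLm ∘ₗ (Matrix.traceLinearMap (Fin d) ℝ ℂ)
    have h1 := (LinearMap.toContinuousLinearMap l).hasFDerivAt.comp_hasDerivAt (0:ℝ)
      (hF.const_mul G)
    exact h1
  let ψ : ℝ → ℝ := fun t => (1 - z - C) * (mpow M z).trace.re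
      + (z + 2 * C) * (mpow M (z - 1) * N t).trace.re
      - C * (mpow M (z - 2) * (N t * N t)).trace.re
  have dψ := (((dtr (mpow M (z-1)) N D dN).const_mul (z + 2 * C)).const_add
     ((1 - z - C) * (mpow M z).trace.re)).sub ((dtr (mpow M (z-2)) _ _ (dN.mul dN)).const_mul C)
  obtain ⟨p1, p2⟩ := mpow_sub_mul hM z
  obtain ⟨p3, p4⟩ := mpow_sub_mul hM (z-1)
  rw [show z - 1 - 1 = z - 2 by ring] at p3 p4
  have hψ0 : ψ 0 = (mpow M z).trace.re := by
    simp only [ψ]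
    rw [N0, ← Matrix.mul_assoc (mpow M (z - 2)), p3, p1]
    ring
  have hlm : IsLocalMax ψ 0 := by
    refine Filter.Eventually.of_forall fun t => ?_
    rw [hψ0]
    have h1 := hmax _ (hEu t)
    rw [hE'] at h1
    refine le_trans (klein hM ?_ hz) h1
    have h2 := sXs_posDef hS (conj_posDef (hEu t) hX)
    rw [hE'] at h2
    exact h2
  have h0 := hlm.hasDerivAt_eq_zero dψ
  rw [N0] at h0
  have h5 : (mpow M (z - 2) * (D * M + M * D)).trace = 2 * (mpow M (z-1) * D).trace := by
    rw [Matrix.mul_add, Matrix.trace_add, ← Matrix.mul_assoc _ M D, p3,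
      Matrix.trace_mul_comm, Matrix.mul_assoc, p4, Matrix.trace_mul_comm]
    ring
  rw [h5] at h0
  have h6 : (2 * (mpow M (z-1) * D).trace).re = 2 * (mpow M (z-1) * D).trace.re := by simp
  rw [h6] at h0
  have : z * (mpow M (z-1) * D).trace.re = 0 := by linarith
  rcases mul_eq_zero.1 this with h | h
  · exact absurd h hz.ne'
  · exact h

lemma critical_commute {d : ℕ} {S X : Matrix (Fin d) (Fin d) ℂ} (hS : S.PosDef) (hX : X.PosDef)
    {z : ℝ} (hz : 0 < z)
    (hmax : ∀ V ∈ Matrix.unitaryGroup (Fin d) ℂ,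
      (mpow (S * (V * X * star V) * S) z).trace.re ≤ (mpow (S * X * S) z).trace.re) :
    Commute S X := by
  have hcr := critical hS hX hz hmax
  set M := S * X * S with hMdef
  have hM : M.PosDef := sXs_posDef hS hX
  obtain ⟨p1, p2⟩ := mpow_sub_mul hM z
  set R := mpow M (z - 1) with hR
  have hRh : star R = R := by
    rw [hR, mpow_eq_cfc]
    exact (cfc_predicate (p := IsSelfAdjoint) (fun x : ℝ => x ^ (z - 1)) M)
  have hSh : star S = S := hS.1
  have hXh : star X = X := hX.1
  obtain ⟨G, hG⟩ : ∃ G, G = S * R * S := ⟨_, rfl⟩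
  have hGh : star G = G := by
    simp [hG, hRh, hSh, Matrix.mul_assoc]
  set K := X * G - G * X with hK
  have hKs : star K = -K := by
    simp [hK, hGh, hXh]
  have h0 := hcr K hKs
  have h1 : (R * (S * (K * X - X * K) * S)).trace = (K * K).trace := by
    have e1 : (R * (S * (K * X - X * K) * S)).trace = (G * (K * X - X * K)).trace := by
      rw [hG, ← Matrix.mul_assoc, Matrix.trace_mul_comm]
      simp only [Matrix.mul_assoc]
    rw [e1, Matrix.mul_sub, Matrix.trace_sub]
    conv_rhs => rw [hK, ← hK, Matrix.sub_mul, Matrix.trace_sub]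
    rw [show (G * (K * X)).trace = (X * G * K).trace by
      rw [← Matrix.mul_assoc, Matrix.trace_mul_comm, Matrix.mul_assoc], Matrix.mul_assoc G X K]
  have hK0 : K = 0 := by
    apply eq_zero_of_trace
    rw [hKs, Matrix.neg_mul, Matrix.trace_neg, Complex.neg_re, ← h1, h0, neg_zero]
  have hXG : X * G = G * X := sub_eq_zero.1 hK0
  -- multiply by S on both sides
  have h2 : mpow M z * (S * S) = (S * S) * mpow M z := by
    have a1 : S * (X * G) * S = mpow M z * (S * S) := by
      rw [← p2, hMdef, hG]; simp only [Matrix.mul_assoc]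
    have a2 : S * (G * X) * S = (S * S) * mpow M z := by
      rw [← p1, hMdef, hG]; simp only [Matrix.mul_assoc]
    rw [← a1, ← a2, hXG]
  have hSS : mpow S 2 = S * S := by
    obtain ⟨W, hW, m, hm, rfl⟩ := posDef_cj hS
    rw [mpow_cj hW, cj_mul hW]
    congr 1; ext i; rw [Real.rpow_two]; ring
  have h3 : Commute (mpow M z) S := (commute_of_mpow hS (z := 2) (by norm_num) (by
    rw [hSS]; exact h2.symm)).symm
  have h4 : Commute M S := commute_of_mpow hM hz.ne' h3
  have h5 : S * (X * S) * S = S * (S * X) * S := by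
    have := h4.eq
    rw [hMdef] at this
    simpa only [Matrix.mul_assoc] using this
  have h6 := hS.isUnit.mul_right_cancel h5
  exact (hS.isUnit.mul_left_cancel h6).symm

lemma submatrix_unitary {d : ℕ} {W : Matrix (Fin d) (Fin d) ℂ}
    (hW : W ∈ Matrix.unitaryGroup (Fin d) ℂ) (e : Equiv.Perm (Fin d)) :
    W.submatrix id e ∈ Matrix.unitaryGroup (Fin d) ℂ := by
  rw [Matrix.mem_unitaryGroup_iff] at hW ⊢
  rw [← hW]
  ext i j
  simp only [Matrix.mul_apply, Matrix.star_apply, Matrix.submatrix_apply, id]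
  exact Equiv.sum_comp e (fun k => W i k * star (W j k))

lemma cj_submatrix {d : ℕ} (W : Matrix (Fin d) (Fin d) ℂ) (v : Fin d → ℝ)
    (e : Equiv.Perm (Fin d)) : cj W v = cj (W.submatrix id e) (v ∘ e) := by
  ext i j
  unfold cj
  rw [Matrix.mul_apply, Matrix.mul_apply]
  simp only [Matrix.mul_diagonal, Matrix.star_apply, Matrix.submatrix_apply,
    id, Function.comp]
  exact (Equiv.sum_comp e (fun k => W i k * (v k : ℂ) * star (W j k))).symm

lemma eigUp_cj {d : ℕ} {A : Matrix (Fin d) (Fin d) ℂ} (hA : A.IsHermitian) :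
    ∃ W ∈ Matrix.unitaryGroup (Fin d) ℂ, A = cj W (eigUp hA) :=
  ⟨_, submatrix_unitary hA.eigenvectorUnitary.2 (Tuple.sort hA.eigenvalues),
    (herm_eq_cj hA).trans (cj_submatrix _ _ (Tuple.sort hA.eigenvalues))⟩

lemma eigDown_cj {d : ℕ} {A : Matrix (Fin d) (Fin d) ℂ} (hA : A.IsHermitian) :
    ∃ W ∈ Matrix.unitaryGroup (Fin d) ℂ, A = cj W (eigDown hA) := by
  obtain ⟨W, hW, h⟩ := eigUp_cj hA
  exact ⟨_, submatrix_unitary hW Fin.revPerm, h.trans (cj_submatrix _ _ Fin.revPerm)⟩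

lemma eigUp_mono {d : ℕ} {A : Matrix (Fin d) (Fin d) ℂ} (hA : A.IsHermitian) :
    Monotone (eigUp hA) := Tuple.monotone_sort _

lemma eigDown_anti {d : ℕ} {A : Matrix (Fin d) (Fin d) ℂ} (hA : A.IsHermitian) :
    Antitone (eigDown hA) := fun _ _ h => Tuple.monotone_sort _ (Fin.rev_le_rev.2 h)

lemma von_neumann {d : ℕ} {W V : Matrix (Fin d) (Fin d) ℂ}
    (hW : W ∈ Matrix.unitaryGroup (Fin d) ℂ) (hV : V ∈ Matrix.unitaryGroup (Fin d) ℂ)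
    {f h : Fin d → ℝ} (hf : Antitone f) (hh : Antitone h) :
    (cj W f * cj V h).trace.re ≤ ∑ i, f i * h i := by
  rw [trace_cj_cj]
  have hT : star W * V ∈ Matrix.unitaryGroup (Fin d) ℂ := mul_mem (Unitary.star_mem hW) hV
  set T := star W * V
  have hds : Matrix.of (fun i j => Complex.normSq (T i j)) ∈ doublyStochastic ℝ (Fin d) := by
    rw [mem_doublyStochastic_iff_sum]
    exact ⟨fun i j => Complex.normSq_nonneg _, unitary_row hT, unitary_col hT⟩
  obtain ⟨w, hw0, hw1, hw⟩ := exists_eq_sum_perm_of_mem_doublyStochastic hds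
  have e : ∀ i j, Complex.normSq (T i j) = ∑ τ, w τ * (τ.permMatrix ℝ) i j := by
    intro i j
    have := congrFun (congrFun hw i) j
    rw [Matrix.sum_apply] at this
    simpa using this.symm
  have e2 : ∑ i, ∑ j, Complex.normSq (T i j) * (f i * h j) =
      ∑ τ : Equiv.Perm (Fin d), w τ * ∑ i, f i * h (τ i) := by
    simp only [e, Finset.sum_mul, Finset.mul_sum]
    rw [Finset.sum_congr rfl fun i _ => Finset.sum_comm]
    rw [Finset.sum_comm]
    refine Finset.sum_congr rfl fun τ _ => ?_
    refine Finset.sum_congr rfl fun i _ => ?_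
    simp [Equiv.Perm.permMatrix, PEquiv.toMatrix_apply]
  rw [e2]
  have hmv : Monovary f h := hf.monovary hh
  calc _ ≤ ∑ τ : Equiv.Perm (Fin d), w τ * ∑ i, f i * h i :=
        Finset.sum_le_sum fun τ _ =>
          mul_le_mul_of_nonneg_left hmv.sum_mul_comp_perm_le_sum_mul (hw0 τ)
    _ = _ := by rw [← Finset.sum_mul, hw1, one_mul]

lemma mpow_conj {d : ℕ} {U M : Matrix (Fin d) (Fin d) ℂ}
    (hU : U ∈ Matrix.unitaryGroup (Fin d) ℂ) (hM : M.IsHermitian) (z : ℝ) :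
    mpow (U * M * star U) z = U * mpow M z * star U := by
  obtain ⟨W, hW, h⟩ := eigUp_cj hM
  rw [h, cj_conj, mpow_cj hW, mpow_cj (mul_mem hU hW), cj_conj]

lemma trace_conj {d : ℕ} {U : Matrix (Fin d) (Fin d) ℂ}
    (hU : U ∈ Matrix.unitaryGroup (Fin d) ℂ) (M : Matrix (Fin d) (Fin d) ℂ) :
    (U * M * star U).trace = M.trace := by
  rw [Matrix.trace_mul_comm, ← Matrix.mul_assoc, Matrix.mem_unitaryGroup_iff'.1 hU, Matrix.one_mul]

lemma upper {d : ℕ} {R Q : Matrix (Fin d) (Fin d) ℂ} (hR : R ∈ Matrix.unitaryGroup (Fin d) ℂ)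
    (hQ : Q ∈ Matrix.unitaryGroup (Fin d) ℂ) {r s : Fin d → ℝ} (hr : ∀ i, 0 < r i)
    (hs : ∀ i, 0 < s i) (har : Antitone r) (has : Antitone s) {z : ℝ} (hz : 0 < z)
    {V : Matrix (Fin d) (Fin d) ℂ} (hV : V ∈ Matrix.unitaryGroup (Fin d) ℂ) :
    (mpow (cj Q s * (V * cj R r * star V) * cj Q s) z).trace.re ≤
      ∑ i, (s i * s i) ^ z * r i ^ z := by
  have hS := cj_posDef hQ s hs
  have hA := cj_posDef hR r hr
  obtain ⟨U, hU, hmax⟩ := exists_max hS hA hz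
  refine (hmax V hV).trans ?_
  have hX := conj_posDef hU hA
  have hcomm : Commute (cj Q s) (U * cj R r * star U) := by
    refine critical_commute hS hX hz fun Y hY => ?_
    have := hmax (Y * U) (mul_mem hY hU)
    simpa only [star_mul, Matrix.mul_assoc] using this
  have e : cj Q s * (U * cj R r * star U) * cj Q s =
      (cj Q s * cj Q s) * (U * cj R r * star U) := by
    rw [Matrix.mul_assoc, ← hcomm.eq, ← Matrix.mul_assoc (cj Q s) (cj Q s)]
  have hSS : (cj Q s * cj Q s).PosDef := by
    rw [cj_mul hQ]
    exact cj_posDef hQ _ fun i => mul_pos (hs i) (hs i)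
  rw [e, mpow_mul_of_commute hSS hX (hcomm.mul_left hcomm), cj_mul hQ, cj_conj, mpow_cj hQ,
    mpow_cj (mul_mem hU hR)]
  apply von_neumann hQ (mul_mem hU hR)
  · intro i j hij
    have := has hij
    exact Real.rpow_le_rpow (mul_pos (hs j) (hs j)).le
      (mul_le_mul this this (hs j).le (hs i).le) hz.le
  · intro i j hij
    exact Real.rpow_le_rpow (hr j).le (har hij) hz.le

lemma pow_simp {s r α z : ℝ} (hs : 0 < s) (hr : 0 < r) (hz : 0 < z) :
    (s ^ ((1 - α) / (2 * z)) * s ^ ((1 - α) / (2 * z))) ^ z * (r ^ (α / z)) ^ z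
      = r ^ α * s ^ (1 - α) := by
  rw [← Real.rpow_add hs, ← Real.rpow_mul hs.le, ← Real.rpow_mul hr.le, mul_comm]
  congr 2 <;> field_simp <;> ring

/-- for positive definite density matrices `ρ, σ`, `α ∈ (1,∞)` and `z ∈ (0,∞)`,
the maximum of `F_{α,z}(ρ, UσU*)` over unitaries `U` is `F_α^C(λ↓(ρ), λ↑(σ))`, attained. -/
theorem stmt_1 {d : ℕ} (ρ σ : Matrix (Fin d) (Fin d) ℂ)
    (hρ : ρ.PosDef) (hσ : σ.PosDef) (hρ1 : ρ.trace = 1) (hσ1 : σ.trace = 1)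
    (α z : ℝ) (hα : 1 < α) (hz : 0 < z) :
    IsGreatest {x : ℝ | ∃ U ∈ Matrix.unitaryGroup (Fin d) ℂ,
        x = Faz ρ (U * σ * star U) α z}
      (FazC (eigDown hρ.1) (eigUp hσ.1) α) := by
  obtain ⟨R, hR, eρ⟩ := eigDown_cj hρ.1
  obtain ⟨Q, hQ, eσ⟩ := eigUp_cj hσ.1
  have har := eigDown_anti hρ.1
  have hms := eigUp_mono hσ.1
  have hr : ∀ i, 0 < eigDown hρ.1 i := fun i => hρ.eigenvalues_pos _
  have hs : ∀ i, 0 < eigUp hσ.1 i := fun i => hσ.eigenvalues_pos _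
  set r := eigDown hρ.1
  set s := eigUp hσ.1
  clear_value r s
  subst eρ eσ
  have hα0 : 0 < α := by linarith
  constructor
  · have hU : R * star Q ∈ Matrix.unitaryGroup (Fin d) ℂ := mul_mem hR (Unitary.star_mem hQ)
    refine ⟨R * star Q, hU, ?_⟩
    rw [cj_conj, Matrix.mul_assoc, Matrix.mem_unitaryGroup_iff'.1 hQ, Matrix.mul_one]
    unfold Faz FazC
    rw [mpow_cj hR, mpow_cj hR, cj_mul hR, cj_mul hR, mpow_cj hR, trace_cj hR]
    congr 1
    refine Finset.sum_congr rfl fun i _ => ?_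
    rw [← pow_simp (hs i) (hr i) hz]
    have h1 := Real.rpow_pos_of_pos (hs i) ((1 - α) / (2 * z))
    have h2 := Real.rpow_pos_of_pos (hr i) (α / z)
    rw [← Real.mul_rpow (by positivity) h2.le]
    congr 1
    ring
  · rintro x ⟨U, hU, rfl⟩
    have hV := Unitary.star_mem hU
    set s' : Fin d → ℝ := fun i => s i ^ ((1 - α) / (2 * z)) with hs'
    set r' : Fin d → ℝ := fun i => r i ^ (α / z) with hr'
    have hspos : ∀ i, 0 < s' i := fun i => Real.rpow_pos_of_pos (hs i) _
    have hrpos : ∀ i, 0 < r' i := fun i => Real.rpow_pos_of_pos (hr i) _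
    have hpd := sXs_posDef (cj_posDef hQ s' hspos) (conj_posDef hV (cj_posDef hR r' hrpos))
    have key := upper hR hQ (r := r') (s := s') hrpos hspos (by
        intro i j hij
        exact Real.rpow_le_rpow (hr j).le (har hij) (by positivity)) (by
        intro i j hij
        refine Real.rpow_le_rpow_of_nonpos (hs i) (hms hij) ?_
        exact div_nonpos_of_nonpos_of_nonneg (by linarith) (by positivity)) hz hV
    have hrew : mpow (U * cj Q s * star U) ((1 - α) / (2 * z)) * mpow (cj R r) (α / z) *
        mpow (U * cj Q s * star U) ((1 - α) / (2 * z)) =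
        U * (cj Q s' * (star U * cj R r' * star (star U)) * cj Q s') * star U := by
      rw [mpow_conj hU (cj_herm _ _), mpow_cj hQ, mpow_cj hR, star_star]
      simp only [Matrix.mul_assoc]
      rfl
    unfold Faz FazC
    rw [hrew, mpow_conj hU hpd.1, trace_conj hU]
    refine Real.rpow_le_rpow ?_ (key.trans (le_of_eq ?_)) (by positivity)
    · obtain ⟨W, hW, v, hv, e⟩ := posDef_cj hpd
      rw [e, mpow_cj hW, trace_cj hW]
      exact Finset.sum_nonneg fun i _ => (Real.rpow_pos_of_pos (hv i) _).le
    · exact Finset.sum_congr rfl fun i _ => pow_simp (hs i) (hr i) hz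
end

section
/- Let ρ and σ be positive definite d×d density matrices, let α ∈ (1,∞) and z ∈ (0,1). Then the minimum of F_{α,z}(ρ, UσU*) over all d×d unitary matrices U equals F_α^C(λ↓(ρ), λ↓(σ)), and this minimum is attained by some unitary U. -/
open Matrix
open scoped ComplexOrder

/-- Conjugated real diagonal matrix. -/
noncomputable def dg {d : ℕ} (W : Matrix (Fin d) (Fin d) ℂ) (r : Fin d → ℝ) :
    Matrix (Fin d) (Fin d) ℂ :=
  W * Matrix.diagonal (fun i => ((r i : ℝ) : ℂ)) * star W

section helpers
variable {d : ℕ}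
local notation "Mat" => Matrix (Fin d) (Fin d) ℂ
local notation "UU" => Matrix.unitaryGroup (Fin d) ℂ

lemma su {W : Mat} (h : W ∈ UU) : star W * W = 1 := Matrix.mem_unitaryGroup_iff'.1 h
lemma us {W : Mat} (h : W ∈ UU) : W * star W = 1 := Matrix.mem_unitaryGroup_iff.1 h

lemma su' {W : Mat} (h : W ∈ UU) (Y : Mat) : star W * (W * Y) = Y := by
  rw [← mul_assoc, su h, one_mul]
lemma us' {W : Mat} (h : W ∈ UU) (Y : Mat) : W * (star W * Y) = Y := by
  rw [← mul_assoc, us h, one_mul]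

lemma dg_intertwine {W V Y : Mat} (hW : W ∈ UU) (hV : V ∈ UU) {r s : Fin d → ℝ} (f : ℝ → ℝ)
    (h : dg W r * Y = Y * dg V s) :
    dg W (fun i => f (r i)) * Y = Y * dg V (fun i => f (s i)) := by
  set Q := star W * Y * V with hQ
  have hY : Y = W * Q * star V := by
    simp only [hQ, mul_assoc, us hV, mul_one, us' hW]
  have h1 : Matrix.diagonal (fun i => ((r i : ℝ) : ℂ)) * Q =
      Q * Matrix.diagonal (fun i => ((s i : ℝ) : ℂ)) := by
    have := congrArg (fun M => star W * M * V) h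
    simpa only [dg, hQ, mul_assoc, us hV, us' hV, su' hV, mul_one, us' hW, su' hW, su hV] using this
  have h2 : Matrix.diagonal (fun i => ((f (r i) : ℝ) : ℂ)) * Q =
      Q * Matrix.diagonal (fun i => ((f (s i) : ℝ) : ℂ)) := by
    ext i j
    have := congrFun (congrFun h1 i) j
    simp only [Matrix.diagonal_mul, Matrix.mul_diagonal] at this ⊢
    by_cases hq : Q i j = 0
    · simp [hq]
    · rw [mul_comm] at this
      have := mul_left_cancel₀ hq this
      have : r i = s j := by exact_mod_cast this
      rw [this, mul_comm]
  rw [hY]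
  simp only [dg, mul_assoc, su' hW, su' hV]
  rw [← mul_assoc (Matrix.diagonal _) Q, h2, mul_assoc]

lemma dg_congr {W V : Mat} (hW : W ∈ UU) (hV : V ∈ UU) {r s : Fin d → ℝ} (f : ℝ → ℝ)
    (h : dg W r = dg V s) : dg W (fun i => f (r i)) = dg V (fun i => f (s i)) := by
  simpa using dg_intertwine (Y := 1) hW hV f (by simpa using h)

lemma dg_herm (W : Mat) (r : Fin d → ℝ) : (dg W r).IsHermitian := by
  unfold dg
  apply Matrix.isHermitian_mul_mul_conjTranspose
  rw [Matrix.IsHermitian, Matrix.diagonal_conjTranspose]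
  congr 1
  ext i
  simp

lemma eig_dg {A : Mat} (hA : A.IsHermitian) : dg (hA.eigenvectorUnitary : Mat) hA.eigenvalues = A := by
  conv_rhs => rw [hA.spectral_theorem]
  rfl

lemma mpow_dg {W : Mat} (hW : W ∈ UU) (r : Fin d → ℝ) (t : ℝ) :
    mpow (dg W r) t = dg W (fun i => r i ^ t) := by
  rw [mpow, dif_pos (dg_herm W r)]
  exact dg_congr (dg_herm W r).eigenvectorUnitary.2 hW (fun x => x ^ t) (eig_dg _)

lemma dg_mul {W : Mat} (hW : W ∈ UU) (r s : Fin d → ℝ) :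
    dg W r * dg W s = dg W (fun i => r i * s i) := by
  simp only [dg, mul_assoc, su' hW]
  rw [← mul_assoc (Matrix.diagonal _) (Matrix.diagonal _), Matrix.diagonal_mul_diagonal]
  simp

lemma dg_one {W : Mat} (hW : W ∈ UU) : dg W (fun _ => 1) = 1 := by
  simp [dg, us hW]

lemma dg_conj (U W : Mat) (r : Fin d → ℝ) : U * dg W r * star U = dg (U * W) r := by
  simp [dg, mul_assoc]

lemma dg_trace {W : Mat} (hW : W ∈ UU) (r : Fin d → ℝ) : (dg W r).trace.re = ∑ i, r i := by
  rw [dg, Matrix.trace_mul_comm, ← mul_assoc, su hW, one_mul, Matrix.trace_diagonal]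
  simp

lemma dg_posDef {W : Mat} (hW : W ∈ UU) {r : Fin d → ℝ} (hr : ∀ i, 0 < r i) :
    (dg W r).PosDef := by
  have h : (Matrix.diagonal (fun i => ((r i : ℝ) : ℂ))).PosDef := by
    rw [Matrix.posDef_diagonal_iff]
    intro i
    exact_mod_cast hr i
  have hu : IsUnit W := ⟨⟨W, star W, us hW, su hW⟩, rfl⟩
  unfold dg
  exact (Matrix.IsUnit.posDef_star_right_conjugate_iff hu).2 h

lemma posDef_dg {A : Mat} (hA : A.PosDef) : ∃ V ∈ UU, ∃ a : Fin d → ℝ, (∀ i, 0 < a i) ∧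
    dg V a = A :=
  ⟨hA.1.eigenvectorUnitary, hA.1.eigenvectorUnitary.2, hA.1.eigenvalues, hA.eigenvalues_pos,
    eig_dg _⟩

/-- `|(V^* W)_{ij}|^2` -/
noncomputable def ov (V W : Mat) : Matrix (Fin d) (Fin d) ℝ :=
  fun i j => Complex.normSq ((star V * W) i j)

lemma ov_ds {V W : Mat} (hV : V ∈ UU) (hW : W ∈ UU) :
    ov V W ∈ doublyStochastic ℝ (Fin d) := by
  have hQ : star V * W ∈ UU := mul_mem (Unitary.star_mem hV) hW
  rw [mem_doublyStochastic_iff_sum]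
  refine ⟨fun i j => Complex.normSq_nonneg _, fun i => ?_, fun j => ?_⟩
  · have := congrFun (congrFun (us hQ) i) i
    rw [Matrix.mul_apply] at this
    have h2 := congrArg Complex.re this
    simp only [Matrix.star_apply, Complex.re_sum, Matrix.one_apply_eq, Complex.one_re] at h2
    rw [← h2]
    refine Finset.sum_congr rfl fun j _ => ?_
    rw [ov, Complex.star_def, Complex.mul_conj, Complex.ofReal_re]
  · have := congrFun (congrFun (su hQ) j) j
    rw [Matrix.mul_apply] at this
    have h2 := congrArg Complex.re this
    simp only [Matrix.star_apply, Complex.re_sum, Matrix.one_apply_eq, Complex.one_re] at h2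
    rw [← h2]
    refine Finset.sum_congr rfl fun i _ => ?_
    rw [ov, Complex.star_def, mul_comm, Complex.mul_conj, Complex.ofReal_re]

lemma trace_dg_mul (V W : Mat) (p q : Fin d → ℝ) :
    (dg V p * dg W q).trace.re = ∑ i, ∑ j, ov V W i j * (p i * q j) := by
  have : (dg V p * dg W q).trace = (Matrix.diagonal (fun i => ((p i : ℝ) : ℂ)) * (star V * W) *
      (Matrix.diagonal (fun i => ((q i : ℝ) : ℂ)) * star (star V * W))).trace := by
    rw [dg, dg, mul_assoc V, mul_assoc V, Matrix.trace_mul_comm V]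
    simp [mul_assoc]
  rw [this, Matrix.trace, Complex.re_sum]
  refine Finset.sum_congr rfl fun i _ => ?_
  rw [Matrix.diag_apply, Matrix.mul_apply, Complex.re_sum]
  refine Finset.sum_congr rfl fun j _ => ?_
  rw [Matrix.diagonal_mul, Matrix.diagonal_mul, Matrix.star_apply, ov, Complex.star_def]
  have e : ((p i : ℂ) * (star V * W) i j * ((q j : ℂ) * (starRingEnd ℂ) ((star V * W) i j)))
    = ((Complex.normSq ((star V * W) i j) * (p i * q j) : ℝ) : ℂ) := by
    push_cast
    rw [← Complex.mul_conj]; ring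
  rw [e, Complex.ofReal_re]

lemma scalar_ineq_s3 {x y z : ℝ} (hx : 0 < x) (hy : 0 < y) (hz0 : 0 < z) (hz1 : z < 1) :
    y ^ z ≤ (1 - z) * x ^ z + z * (x ^ (z - 1) * y) := by
  have h := Real.geom_mean_le_arith_mean2_weighted (w₁ := 1 - z) (w₂ := z) (p₁ := x ^ z)
    (p₂ := x ^ (z - 1) * y) (by linarith) hz0.le (by positivity) (by positivity) (by ring)
  refine le_trans (le_of_eq ?_) h
  rw [Real.mul_rpow (by positivity) hy.le, ← Real.rpow_mul hx.le, ← Real.rpow_mul hx.le,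
    ← mul_assoc, ← Real.rpow_add hx]
  rw [show z * (1 - z) + (z - 1) * z = 0 by ring, Real.rpow_zero, one_mul]

lemma klein_s3 {X Y : Mat} (hX : X.PosDef) (hY : Y.PosDef) {z : ℝ} (hz0 : 0 < z) (hz1 : z < 1) :
    (mpow Y z).trace.re ≤ (1 - z) * (mpow X z).trace.re + z * (mpow X (z - 1) * Y).trace.re := by
  obtain ⟨V, hV, x, hx, rfl⟩ := posDef_dg hX
  obtain ⟨W, hW, y, hy, rfl⟩ := posDef_dg hY
  have e1 : (mpow (dg W y) z).trace.re = ∑ i, ∑ j, ov V W i j * y j ^ z := by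
    rw [mpow_dg hW, ← one_mul (dg W _), ← dg_one hV, trace_dg_mul]
    simp
  have e2 : (mpow (dg V x) z).trace.re = ∑ i, ∑ j, ov V W i j * x i ^ z := by
    rw [mpow_dg hV, ← mul_one (dg V _), ← dg_one hW, trace_dg_mul]
    simp
  rw [e1, e2, mpow_dg hV, trace_dg_mul, Finset.mul_sum, Finset.mul_sum, ← Finset.sum_add_distrib]
  refine Finset.sum_le_sum fun i _ => ?_
  rw [Finset.mul_sum, Finset.mul_sum, ← Finset.sum_add_distrib]
  refine Finset.sum_le_sum fun j _ => ?_
  have := mul_le_mul_of_nonneg_left (scalar_ineq_s3 (hx i) (hy j) hz0 hz1)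
    (show 0 ≤ ov V W i j from Complex.normSq_nonneg _)
  linarith

lemma sortDown_perm (p : Fin d → ℝ) : ∃ e : Equiv.Perm (Fin d), sortDown p = p ∘ e :=
  ⟨Fin.revPerm.trans (Tuple.sort p), rfl⟩

lemma sortDown_anti (p : Fin d → ℝ) : Antitone (sortDown p) := fun _ _ h =>
  Tuple.monotone_sort p (Fin.rev_le_rev.2 h)

lemma perm_lower {a b : Fin d → ℝ} (ha : ∀ i, 0 < a i) (hb : ∀ i, 0 < b i) {α : ℝ} (hα : 1 < α)
    (π : Equiv.Perm (Fin d)) :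
    ∑ i, sortDown a i ^ α * sortDown b i ^ (1 - α) ≤ ∑ i, a i ^ α * b (π i) ^ (1 - α) := by
  obtain ⟨e, he⟩ := sortDown_perm a
  obtain ⟨e', he'⟩ := sortDown_perm b
  have hA : Antivary (fun i => sortDown a i ^ α) (fun i => sortDown b i ^ (1 - α)) := by
    apply Antitone.antivary
    · intro i j h
      exact Real.rpow_le_rpow (by rw [he]; exact (ha _).le) (sortDown_anti a h) (by linarith)
    · intro i j h
      exact Real.rpow_le_rpow_of_nonpos (by rw [he']; exact hb _) (sortDown_anti b h) (by linarith)
  have := hA.sum_mul_le_sum_mul_comp_perm (σ := (e.trans π).trans e'.symm)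
  refine this.trans (le_of_eq ?_)
  rw [← Equiv.sum_comp e (fun i => a i ^ α * b (π i) ^ (1 - α))]
  simp [he, he']

lemma trace_lower {V W : Mat} (hV : V ∈ UU) (hW : W ∈ UU) {a b : Fin d → ℝ}
    (ha : ∀ i, 0 < a i) (hb : ∀ i, 0 < b i) {α : ℝ} (hα : 1 < α) :
    ∑ i, sortDown a i ^ α * sortDown b i ^ (1 - α) ≤
      (dg V (fun i => a i ^ α) * dg W (fun i => b i ^ (1 - α))).trace.re := by
  rw [trace_dg_mul]
  obtain ⟨w, hw0, hw1, hM⟩ := exists_eq_sum_perm_of_mem_doublyStochastic (ov_ds hV hW)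
  have : ∑ i, ∑ j, ov V W i j * (a i ^ α * b j ^ (1 - α)) =
      ∑ π, w π * ∑ i, a i ^ α * b (π i) ^ (1 - α) := by
    rw [← hM]
    simp only [Matrix.sum_apply, Matrix.smul_apply, Finset.sum_mul, smul_eq_mul]
    simp only [Finset.mul_sum]
    have : ∀ i : Fin d, ∑ j, ∑ π : Equiv.Perm (Fin d), w π * π.permMatrix ℝ i j *
        (a i ^ α * b j ^ (1 - α)) = ∑ π : Equiv.Perm (Fin d), w π * (a i ^ α * b (π i) ^ (1 - α)) := by
      intro i
      rw [Finset.sum_comm]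
      refine Finset.sum_congr rfl fun π _ => ?_
      simp [PEquiv.toMatrix_apply, Equiv.Perm.permMatrix, Equiv.toPEquiv_apply]
    simp only [this]
    rw [Finset.sum_comm]
  rw [this]
  calc _ = ∑ π, w π * ∑ i, sortDown a i ^ α * sortDown b i ^ (1 - α) := by
        rw [← Finset.sum_mul, hw1, one_mul]
    _ ≤ _ := Finset.sum_le_sum fun π _ =>
        mul_le_mul_of_nonneg_left (perm_lower ha hb hα π) (hw0 π)

open scoped Matrix.Norms.L2Operator in
lemma commute_of_min {C A : Mat} (hC : C.IsHermitian) (hA : A.IsHermitian)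
    (h : ∀ V ∈ UU, (C * A).trace.re ≤ (C * (V * A * star V)).trace.re) : C * A = A * C := by
  set K : Mat := C * A - A * C with hK
  have hKs : star K = -K := by
    simp only [hK, star_sub, star_mul, Matrix.star_eq_conjTranspose, hC.eq, hA.eq]
    abel
  have hd1 : HasDerivAt (fun t : ℝ => NormedSpace.exp (t • K)) K 0 := by
    simpa using hasDerivAt_exp_smul_const (𝕂 := ℝ) K (0 : ℝ)
  have hd2 : HasDerivAt (fun t : ℝ => NormedSpace.exp (t • (-K))) (-K) 0 := by
    simpa using hasDerivAt_exp_smul_const (𝕂 := ℝ) (-K) (0 : ℝ)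
  have hd3 := ((hd1.mul_const A).mul hd2).const_mul C
  let L : Mat →L[ℝ] ℝ := LinearMap.toContinuousLinearMap
    (Complex.reLm.comp ((Matrix.traceLinearMap (Fin d) ℂ ℂ).restrictScalars ℝ))
  have hd4 := L.hasFDerivAt.comp_hasDerivAt (0 : ℝ) hd3
  have hmin : IsLocalMin (fun t : ℝ => L (C * (NormedSpace.exp (t • K) * A *
      NormedSpace.exp (t • (-K))))) 0 := by
    refine Filter.Eventually.of_forall fun t => ?_
    have hs : star (NormedSpace.exp (t • K)) = NormedSpace.exp (t • (-K)) := by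
      rw [NormedSpace.star_exp, star_smul, hKs]; simp
    have hU : NormedSpace.exp (t • K) ∈ UU := by
      rw [Matrix.mem_unitaryGroup_iff, hs, ← Matrix.exp_add_of_commute]
      · simp
      · simp [Commute, SemiconjBy]
    have := h _ hU
    rw [hs] at this
    simpa [L] using this
  have h0 := hmin.hasDerivAt_eq_zero hd4
  have h1 : (star K * K).trace.re = 0 := by
    have e : (star K * K).trace = (C * (K * A * 1 + 1 * A * (-K))).trace := by
      rw [hKs]
      nth_rewrite 1 [hK]
      have : (C * (K * A)).trace = (A * C * K).trace := by
        rw [← mul_assoc, Matrix.trace_mul_comm, mul_assoc]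
      simp only [mul_one, one_mul, mul_add, neg_sub, sub_mul, Matrix.trace_sub, Matrix.trace_add,
        this, mul_neg, Matrix.trace_neg, mul_assoc]
      ring
    rw [e]
    simpa [L] using h0
  have h2 : (star K * K).trace = 0 := by
    have hp : (star K * K).PosSemidef := Matrix.posSemidef_conjTranspose_mul_self K
    have := hp.trace_nonneg
    rw [Complex.le_def] at this
    apply Complex.ext
    · simpa using h1
    · simpa using this.2.symm
  have h3 : K = 0 := Matrix.trace_conjTranspose_mul_self_eq_zero_iff.1 h2
  exact sub_eq_zero.1 h3

lemma mpow_posDef {A : Mat} (hA : A.PosDef) (t : ℝ) : (mpow A t).PosDef := by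
  obtain ⟨V, hV, a, ha, rfl⟩ := posDef_dg hA
  rw [mpow_dg hV]
  exact dg_posDef hV fun i => Real.rpow_pos_of_pos (ha i) _

lemma mpow_mul {A : Mat} (hA : A.PosDef) (s t : ℝ) : mpow A s * mpow A t = mpow A (s + t) := by
  obtain ⟨V, hV, a, ha, rfl⟩ := posDef_dg hA
  rw [mpow_dg hV, mpow_dg hV, mpow_dg hV, dg_mul hV]
  congr 1; ext i
  rw [Real.rpow_add (ha i)]

lemma mpow_mpow {A : Mat} (hA : A.PosDef) (s t : ℝ) : mpow (mpow A s) t = mpow A (s * t) := by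
  obtain ⟨V, hV, a, ha, rfl⟩ := posDef_dg hA
  rw [mpow_dg hV, mpow_dg hV, mpow_dg hV]
  congr 1; ext i
  rw [Real.rpow_mul (ha i).le]

lemma mpow_one' {A : Mat} (hA : A.PosDef) : mpow A 1 = A := by
  obtain ⟨V, hV, a, ha, rfl⟩ := posDef_dg hA
  rw [mpow_dg hV]; simp

lemma mpow_zero' {A : Mat} (hA : A.PosDef) : mpow A 0 = 1 := by
  obtain ⟨V, hV, a, ha, rfl⟩ := posDef_dg hA
  rw [mpow_dg hV]; simp [dg_one hV]

lemma mpow_comm {A Y : Mat} (hA : A.PosDef) (t : ℝ) (h : A * Y = Y * A) :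
    mpow A t * Y = Y * mpow A t := by
  obtain ⟨V, hV, a, ha, rfl⟩ := posDef_dg hA
  rw [mpow_dg hV]
  exact dg_intertwine hV hV (fun x => x ^ t) h

lemma mpow_conj_s3 {A U : Mat} (hA : A.PosDef) (hU : U ∈ UU) (t : ℝ) :
    mpow (U * A * star U) t = U * mpow A t * star U := by
  obtain ⟨V, hV, a, ha, rfl⟩ := posDef_dg hA
  rw [dg_conj, mpow_dg hV, mpow_dg (mul_mem hU hV), dg_conj]

lemma conj_posDef_s3 {A U : Mat} (hA : A.PosDef) (hU : U ∈ UU) : (U * A * star U).PosDef := by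
  obtain ⟨V, hV, a, ha, rfl⟩ := posDef_dg hA
  rw [dg_conj]
  exact dg_posDef (mul_mem hU hV) ha

lemma sas_posDef {A S : Mat} (hA : A.PosDef) (hS : S.PosDef) : (S * A * S).PosDef := by
  have := (Matrix.IsUnit.posDef_star_right_conjugate_iff hS.isUnit).2 hA
  rwa [Matrix.star_eq_conjTranspose, hS.1.eq] at this

lemma exp_dg {W : Mat} (hW : W ∈ UU) (r : Fin d → ℝ) :
    NormedSpace.exp (dg W r) = dg W (fun i => Real.exp (r i)) := by
  let u : (Mat)ˣ := ⟨W, star W, us hW, su hW⟩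
  have := Matrix.exp_units_conj u (Matrix.diagonal (fun i => ((r i : ℝ) : ℂ)))
  have e : ∀ M : Mat, (u : Mat) * M * ((u⁻¹ : (Mat)ˣ) : Mat) = W * M * star W := fun _ => rfl
  rw [e, e] at this
  rw [dg, dg, this, Matrix.exp_diagonal]
  congr 3
  ext i
  rw [Pi.coe_exp, Complex.ofReal_exp, Complex.exp_eq_exp_ℂ]

lemma exists_log_s3 {A : Mat} (hA : A.PosDef) : ∃ H : Mat, H.IsHermitian ∧
    (∀ t : ℝ, mpow A t = NormedSpace.exp (t • H)) ∧ ∀ Y : Mat, A * Y = Y * A → H * Y = Y * H := by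
  obtain ⟨V, hV, a, ha, rfl⟩ := posDef_dg hA
  refine ⟨dg V (fun i => Real.log (a i)), dg_herm _ _, fun t => ?_, fun Y h =>
    dg_intertwine hV hV Real.log h⟩
  have : t • dg V (fun i => Real.log (a i)) = dg V (fun i => Real.log (a i) * t) := by
    rw [dg, dg, ← Matrix.smul_mul, ← Matrix.mul_smul, ← Matrix.diagonal_smul]
    congr 3
    ext i
    simp [mul_comm]
  rw [this, exp_dg hV, mpow_dg hV]
  congr 1; ext i
  rw [Real.rpow_def_of_pos (ha i)]

lemma mpow_exp_s3 {H : Mat} (hH : H.IsHermitian) (t : ℝ) :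
    mpow (NormedSpace.exp H) t = NormedSpace.exp (t • H) := by
  have hV := hH.eigenvectorUnitary.2
  rw [← eig_dg hH]
  generalize hH.eigenvalues = a at *
  generalize (hH.eigenvectorUnitary : Mat) = V at *
  have : t • dg V a = dg V (fun i => a i * t) := by
    rw [dg, dg, ← Matrix.smul_mul, ← Matrix.mul_smul, ← Matrix.diagonal_smul]
    congr 3
    ext i
    simp [mul_comm]
  rw [this, exp_dg hV, exp_dg hV, mpow_dg hV]
  congr 1; ext i
  rw [Real.exp_mul]

lemma comm_pow {S A : Mat} (hS : S.PosDef) (hA : A.PosDef) (h : S * A = A * S) (z : ℝ) :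
    mpow (S * A * S) z = mpow S (2 * z) * mpow A z := by
  obtain ⟨H, hH, hSt, hHc⟩ := exists_log_s3 hS
  obtain ⟨G, hG, hAt, hGc⟩ := exists_log_s3 hA
  have hc : Commute H G := (hGc H (hHc A h).symm).symm
  have h1 : S * A * S = NormedSpace.exp ((2 : ℝ) • H + G) := by
    rw [mul_assoc, ← h, ← mul_assoc]
    rw [Matrix.exp_add_of_commute _ _ (hc.smul_left (2 : ℝ)), ← hSt, ← one_smul ℝ G, ← hAt,
      mpow_one' hA]
    congr 1
    nth_rewrite 1 [← mpow_one' hS]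
    nth_rewrite 2 [← mpow_one' hS]
    rw [mpow_mul hS]; norm_num
  have h2 : ((2 : ℝ) • H + G).IsHermitian := by
    refine Matrix.IsHermitian.add ?_ hG
    rw [Matrix.IsHermitian, Matrix.conjTranspose_smul, hH.eq]; simp
  rw [h1, mpow_exp_s3 h2, hSt, hAt, smul_add, smul_smul, mul_comm z 2]
  rw [Matrix.exp_add_of_commute _ _ ((hc.smul_left (2 * z)).smul_right z)]

lemma core {S A : Mat} (hS : S.PosDef) (hA : A.PosDef) {z : ℝ} (hz0 : 0 < z) (hz1 : z < 1)
    (h : ∀ V ∈ UU, (mpow (S * A * S) z).trace.re ≤ (mpow (S * (V * A * star V) * S) z).trace.re) :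
    S * A = A * S := by
  have hX := sas_posDef hA hS
  set X := S * A * S with hXd
  set K := mpow X (z - 1) with hK
  have hKp : K.PosDef := mpow_posDef hX _
  have hKX : K * X = mpow X z := by
    have := mpow_mul hX (z - 1) 1
    rwa [mpow_one' hX, sub_add_cancel] at this
  have hXK : X * K = mpow X z := by
    have := mpow_mul hX 1 (z - 1)
    rwa [mpow_one' hX, add_sub_cancel] at this
  have hC : (S * K * S).PosDef := sas_posDef hKp hS
  have hcyc : ∀ B : Mat, (S * K * S * B).trace = (K * (S * B * S)).trace := by
    intro B
    rw [mul_assoc, mul_assoc, Matrix.trace_mul_comm]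
    simp only [mul_assoc]
  have hcomm : S * K * S * A = A * (S * K * S) := by
    refine commute_of_min hC.1 hA.1 fun V hV => ?_
    rw [hcyc, hcyc, ← hXd]
    have h1 := h V hV
    have h2 := klein_s3 hX (sas_posDef (conj_posDef_s3 hA hV) hS) hz0 hz1
    rw [← hK] at h2
    rw [hKX]
    nlinarith
  -- S² commutes with X^z
  have h1 : (S * S) * mpow X z = mpow X z * (S * S) := by
    have := congrArg (fun M => S * M * S) hcomm
    calc S * S * mpow X z = S * (S * K * S * A) * S := by rw [← hKX, hXd]; simp only [mul_assoc]
      _ = S * (A * (S * K * S)) * S := by rw [hcomm]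
      _ = mpow X z * (S * S) := by rw [← hXK, hXd]; simp only [mul_assoc]
  have h2 : X * (S * S) = (S * S) * X := by
    have := mpow_comm (mpow_posDef hX z) z⁻¹ h1.symm
    rw [mpow_mpow hX, mul_inv_cancel₀ hz0.ne', mpow_one' hX] at this
    exact this
  have h3 : A * (S * S) = S * S * A := by
    have hu := hS.isUnit
    rw [hXd] at h2
    have : S * (A * (S * S) * S) = S * (S * S * A * S) := by simpa only [mul_assoc] using h2
    exact hu.mul_right_cancel (hu.mul_left_cancel this)
  have hSS : mpow S 2 = S * S := by
    nth_rewrite 2 [← mpow_one' hS]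
    nth_rewrite 3 [← mpow_one' hS]
    rw [mpow_mul hS]; norm_num
  have h4 := mpow_comm (mpow_posDef hS 2) (1/2) (Y := A) (by rw [hSS]; exact h3.symm)
  rw [mpow_mpow hS] at h4
  norm_num at h4
  rwa [mpow_one' hS] at h4

open scoped Matrix.Norms.L2Operator in
lemma cont_mpow {z : ℝ} (hz0 : 0 < z) {S A : Mat} (hS : S.PosDef) (hA : A.PosDef) :
    Continuous (fun U : UU => (mpow (S * (star (U : Mat) * A * (U : Mat)) * S) z).trace.re) := by
  have hh : ∀ U : UU, (S * (star (U : Mat) * A * (U : Mat)) * S).PosDef := fun U => by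
    have := conj_posDef_s3 hA (Unitary.star_mem U.2)
    rw [star_star] at this
    exact sas_posDef this hS
  have : ∀ U : UU, mpow (S * (star (U : Mat) * A * (U : Mat)) * S) z =
      cfc (fun x : ℝ => x ^ z) (S * (star (U : Mat) * A * (U : Mat)) * S) := by
    intro U
    rw [(hh U).1.cfc_eq, mpow, dif_pos (hh U).1]
    rfl
  simp only [this]
  have hc : Continuous (fun U : UU => S * (star (U : Mat) * A * (U : Mat)) * S) := by fun_prop
  have := Continuous.cfc_of_mem_nhdsSet (𝕜 := ℝ) (s := Set.univ) (fun x : ℝ => x ^ z)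
    Filter.univ_mem hc (fun U => (hh U).1) (Real.continuous_rpow_const hz0.le).continuousOn
  exact Complex.continuous_re.comp (Continuous.matrix_trace this)

open scoped Matrix.Norms.L2Operator in
lemma compact_UU : CompactSpace UU := by
  refine isCompact_iff_compactSpace.1 (?_ : IsCompact ((UU : Submonoid Mat) : Set Mat))
  refine Metric.isCompact_of_isClosed_isBounded ?_ ?_
  · have : ((UU : Submonoid Mat) : Set Mat) = {U | U * star U = 1} := by
      ext U; exact Matrix.mem_unitaryGroup_iff
    rw [this]
    exact isClosed_eq (by fun_prop) continuous_const
  · rw [isBounded_iff_forall_norm_le]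
    refine ⟨1, fun U hU => ?_⟩
    rcases subsingleton_or_nontrivial Mat with hs | hn
    · rw [Subsingleton.elim U 0]; simp
    · exact (CStarRing.norm_of_mem_unitary hU).le

lemma exists_min {z : ℝ} (hz0 : 0 < z) {S A : Mat} (hS : S.PosDef) (hA : A.PosDef) :
    ∃ U0 ∈ UU, ∀ U1 ∈ UU, (mpow (S * (star U0 * A * U0) * S) z).trace.re ≤
      (mpow (S * (star U1 * A * U1) * S) z).trace.re := by
  have := compact_UU (d := d)
  obtain ⟨U0, -, hmin⟩ := isCompact_univ.exists_isMinOn Set.univ_nonempty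
    (cont_mpow hz0 hS hA).continuousOn
  rw [isMinOn_iff] at hmin
  exact ⟨U0, U0.2, fun U1 h1 => hmin ⟨U1, h1⟩ (Set.mem_univ _)⟩

lemma dg_reindex {W : Mat} (hW : W ∈ UU) (b : Fin d → ℝ) (π : Equiv.Perm (Fin d)) :
    ∃ W' ∈ UU, dg W' (b ∘ π) = dg W b := by
  have key : ∀ r : Fin d → ℝ, dg (W.submatrix id π) (r ∘ π) = dg W r := by
    intro r
    ext i j
    rw [dg, dg, Matrix.mul_apply, Matrix.mul_apply]
    simp only [Matrix.mul_diagonal, Matrix.submatrix_apply, Matrix.star_apply,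
      id, Function.comp]
    exact Equiv.sum_comp π (fun k => W i k * (r k : ℂ) * star (W j k))
  refine ⟨W.submatrix id π, ?_, key b⟩
  rw [Matrix.mem_unitaryGroup_iff]
  have := key (fun _ => 1)
  rw [dg_one hW] at this
  simpa [dg, Function.comp_def] using this

lemma Faz_eq {ρ σ U : Mat} (hρ : ρ.PosDef) (hσ : σ.PosDef) (hU : U ∈ UU) (α z : ℝ) :
    Faz ρ (U * σ * star U) α z =
      ((mpow (mpow σ ((1 - α) / (2 * z)) * (star U * mpow ρ (α / z) * U) *
        mpow σ ((1 - α) / (2 * z))) z).trace.re) ^ (1 / α) := by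
  have hA : (star U * mpow ρ (α / z) * U).PosDef := by
    simpa using conj_posDef_s3 (mpow_posDef hρ (α / z)) (Unitary.star_mem hU)
  have hX := sas_posDef hA (mpow_posDef hσ ((1 - α) / (2 * z)))
  have e := mpow_conj_s3 hX hU z
  rw [Faz, mpow_conj_s3 hσ hU]
  have e2 : U * mpow σ ((1 - α) / (2 * z)) * star U * mpow ρ (α / z) *
      (U * mpow σ ((1 - α) / (2 * z)) * star U) =
      U * (mpow σ ((1 - α) / (2 * z)) * (star U * mpow ρ (α / z) * U) *
        mpow σ ((1 - α) / (2 * z))) * star U := by simp only [mul_assoc]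
  rw [e2, e, Matrix.trace_mul_comm, ← mul_assoc, su hU, one_mul]

end helpers

/-- for positive definite density matrices `ρ, σ`, `α ∈ (1,∞)` and `z ∈ (0,1)`,
the minimum of `F_{α,z}(ρ, UσU*)` over unitaries `U` is `F_α^C(λ↓(ρ), λ↓(σ))`, attained. -/
theorem stmt_3 {d : ℕ} (ρ σ : Matrix (Fin d) (Fin d) ℂ)
    (hρ : ρ.PosDef) (hσ : σ.PosDef) (hρ1 : ρ.trace = 1) (hσ1 : σ.trace = 1)
    (α z : ℝ) (hα : 1 < α) (hz : z ∈ Set.Ioo (0 : ℝ) 1) :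
    IsLeast {x : ℝ | ∃ U ∈ Matrix.unitaryGroup (Fin d) ℂ,
        x = Faz ρ (U * σ * star U) α z}
      (FazC (eigDown hρ.1) (eigDown hσ.1) α) := by
  obtain ⟨hz0, hz1⟩ := hz
  have hα0 : 0 < α := by linarith
  have ha := hρ.eigenvalues_pos
  have hb := hσ.eigenvalues_pos
  have hV := hρ.1.eigenvectorUnitary.2
  have hW := hσ.1.eigenvectorUnitary.2
  have hρe := eig_dg hρ.1
  have hσe := eig_dg hσ.1
  rw [eigDown, eigDown]
  generalize hρ.1.eigenvalues = a at *
  generalize hσ.1.eigenvalues = b at *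
  generalize (hρ.1.eigenvectorUnitary : Matrix (Fin d) (Fin d) ℂ) = V at *
  generalize (hσ.1.eigenvectorUnitary : Matrix (Fin d) (Fin d) ℂ) = W at *
  constructor
  · obtain ⟨e, he⟩ := sortDown_perm a
    obtain ⟨e', he'⟩ := sortDown_perm b
    obtain ⟨V', hV', hVe⟩ := dg_reindex hV a e
    obtain ⟨W', hW', hWe⟩ := dg_reindex hW b e'
    refine ⟨V' * star W', mul_mem hV' (Unitary.star_mem hW'), ?_⟩
    have h1 : V' * star W' * σ * star (V' * star W') = dg V' (sortDown b) := by
      rw [← hσe, ← hWe, dg_conj, he', mul_assoc, su hW', mul_one]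
    rw [h1, ← hρe, ← hVe, ← he, Faz, mpow_dg hV', mpow_dg hV', dg_mul hV', dg_mul hV', mpow_dg hV',
      dg_trace hV', FazC]
    congr 1
    refine Finset.sum_congr rfl fun i _ => ?_
    have hx : 0 < sortDown a i := by rw [he]; exact ha _
    have hy : 0 < sortDown b i := by rw [he']; exact hb _
    rw [Real.mul_rpow (by positivity) (by positivity), Real.mul_rpow (by positivity) (by positivity),
      ← Real.rpow_mul hx.le, ← Real.rpow_mul hy.le, mul_right_comm, ← Real.rpow_add hy, mul_comm]
    congr 2 <;> field_simp
    ring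
  · rintro x ⟨U, hU, rfl⟩
    rw [Faz_eq hρ hσ hU, FazC]
    have hS := mpow_posDef hσ ((1 - α) / (2 * z))
    have hA := mpow_posDef hρ (α / z)
    obtain ⟨U0, hU0, hmin'⟩ := exists_min hz0 hS hA
    have hp : ∀ i, 0 < sortDown a i := fun i => by
      obtain ⟨e, he⟩ := sortDown_perm a
      rw [he]; exact ha _
    have hq : ∀ i, 0 < sortDown b i := fun i => by
      obtain ⟨e, he⟩ := sortDown_perm b
      rw [he]; exact hb _
    refine Real.rpow_le_rpow (Finset.sum_nonneg fun i _ => mul_nonneg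
      (Real.rpow_nonneg (hp i).le _) (Real.rpow_nonneg (hq i).le _)) ?_ (by positivity)
    refine le_trans ?_ (hmin' U hU)
    have hA0 : (star U0 * mpow ρ (α / z) * U0).PosDef := by
      simpa using conj_posDef_s3 hA (Unitary.star_mem hU0)
    have hcomm := core hS hA0 hz0 hz1 (fun X hX => by
      have := hmin' (U0 * star X) (mul_mem hU0 (Unitary.star_mem hX))
      simpa [mul_assoc] using this)
    rw [comm_pow hS hA0 hcomm, mpow_mpow hσ, Matrix.trace_mul_comm]
    have e1 : (1 - α) / (2 * z) * (2 * z) = 1 - α := by field_simp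
    have e2 : mpow (star U0 * mpow ρ (α / z) * U0) z = star U0 * mpow ρ α * U0 := by
      have := mpow_conj_s3 hA (Unitary.star_mem hU0) z
      rw [star_star, mpow_mpow hρ, div_mul_cancel₀ _ hz0.ne'] at this
      exact this
    have e3 : star U0 * mpow ρ α * U0 = dg (star U0 * V) (fun i => a i ^ α) := by
      rw [← hρe, mpow_dg hV, ← dg_conj, star_star]
    rw [e1, e2, e3, ← hσe, mpow_dg hW]
    exact trace_lower (mul_mem (Unitary.star_mem hU0) hV) hW ha hb hα
end

section
/- Let ρ and σ be positive definite d×d density matrices, and let (α,z) satisfy either 1 < α ≤ 2 with α/2 ≤ z ≤ α, or 2 ≤ α < ∞ with α−1 ≤ z ≤ α. Then the minimum of F_{α,z}(ρ, UσU*) over all d×d unitary matrices U equals F_α^C(λ↓(ρ), λ↓(σ)), and this minimum is attained at a unitary that simultaneously diagonalizes ρ and UσU* with both eigenvalue lists in decreasing order. -/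
open Matrix
open scoped ComplexOrder

/-- Taylor formula with integral remainder, in the form used for majorization. -/
lemma exp_repr (z a e T : ℝ) (h1 : e ≤ a) (h2 : a ≤ T) :
    ∫ s in e..T, z ^ 2 * Real.exp (z * s) * (max a s - s)
      = Real.exp (z * a) - Real.exp (z * e) - z * Real.exp (z * e) * (a - e) := by
  have hc : Continuous fun s : ℝ => z ^ 2 * Real.exp (z * s) * (max a s - s) := by fun_prop
  rw [← intervalIntegral.integral_add_adjacent_intervals (b := a)
    (hc.intervalIntegrable _ _) (hc.intervalIntegrable _ _)]
  have e2 : ∫ s in a..T, z ^ 2 * Real.exp (z * s) * (max a s - s) = 0 := by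
    rw [intervalIntegral.integral_congr (g := fun _ => (0 : ℝ))]
    · simp
    · intro s hs
      rw [Set.uIcc_of_le h2] at hs
      simp [max_eq_right hs.1]
  have e1 : ∫ s in e..a, z ^ 2 * Real.exp (z * s) * (max a s - s)
      = ∫ s in e..a, z ^ 2 * Real.exp (z * s) * (a - s) := by
    apply intervalIntegral.integral_congr
    intro s hs
    rw [Set.uIcc_of_le h1] at hs
    simp [max_eq_left hs.2]
  rw [e1, e2, add_zero]
  rw [intervalIntegral.integral_eq_sub_of_hasDerivAt
    (f := fun s => z * Real.exp (z * s) * (a - s) + Real.exp (z * s))]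
  · simp; ring
  · intro s _
    have h0 : HasDerivAt (fun s : ℝ => Real.exp (z * s)) (Real.exp (z * s) * (z * 1)) s :=
      ((hasDerivAt_id s).const_mul z).exp
    have h3 := ((h0.const_mul z).mul ((hasDerivAt_id s).const_sub a)).add h0
    refine HasDerivAt.congr_deriv h3 ?_
    simp only [id]; ring
  · apply Continuous.intervalIntegrable; fun_prop

lemma exp_sum_le {ι : Type*} [Fintype ι] (a b : ι → ℝ) (z : ℝ) (hz : 0 < z)
    (h : ∀ s : ℝ, ∑ i, max (a i) s ≤ ∑ i, max (b i) s) :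
    ∑ i, Real.exp (z * a i) ≤ ∑ i, Real.exp (z * b i) := by
  classical
  set R : ℝ := ∑ i, (|a i| + |b i|) with hR
  have hi : ∀ i, |a i| + |b i| ≤ R := fun i =>
    Finset.single_le_sum (f := fun i => |a i| + |b i|) (fun j _ => by positivity)
      (Finset.mem_univ i)
  have hR0 : 0 ≤ R := Finset.sum_nonneg fun j _ => by positivity
  have ha1 : ∀ i, -R ≤ a i := fun i => by
    have := hi i; have := neg_abs_le (a i); have := abs_nonneg (b i); linarith
  have ha2 : ∀ i, a i ≤ R := fun i => by
    have := hi i; have := le_abs_self (a i); have := abs_nonneg (b i); linarith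
  have hb1 : ∀ i, -R ≤ b i := fun i => by
    have := hi i; have := neg_abs_le (b i); have := abs_nonneg (a i); linarith
  have hb2 : ∀ i, b i ≤ R := fun i => by
    have := hi i; have := le_abs_self (b i); have := abs_nonneg (a i); linarith
  have key : ∀ c : ι → ℝ, (∀ i, -R ≤ c i) → (∀ i, c i ≤ R) →
      ∑ i, Real.exp (z * c i) = (∫ s in (-R)..R, z ^ 2 * Real.exp (z * s) *
        ((∑ i, max (c i) s) - (Fintype.card ι) * s)) + (∑ i : ι, Real.exp (z * -R)) +
        z * Real.exp (z * -R) * ((∑ i, c i) - (Fintype.card ι) * -R) := by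
    intro c h1 h2
    have : ∀ s : ℝ, z ^ 2 * Real.exp (z * s) * ((∑ i, max (c i) s) - (Fintype.card ι) * s)
        = ∑ i, z ^ 2 * Real.exp (z * s) * (max (c i) s - s) := by
      intro s
      rw [← Finset.mul_sum, Finset.sum_sub_distrib]; simp
    simp_rw [this]
    rw [intervalIntegral.integral_finsetSum
      (fun i _ => Continuous.intervalIntegrable (by fun_prop) _ _)]
    rw [Finset.sum_congr rfl (fun i _ => exp_repr z (c i) (-R) R (h1 i) (h2 i))]
    rw [Finset.sum_sub_distrib, Finset.sum_sub_distrib, ← Finset.mul_sum,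
      Finset.sum_sub_distrib]
    simp
    ring
  rw [key a ha1 ha2, key b hb1 hb2]
  have hsum : ∑ i, a i ≤ ∑ i, b i := by
    have := h (-R)
    simpa [max_eq_left (ha1 _), max_eq_left (hb1 _)] using this
  have hint : (∫ s in (-R)..R, z ^ 2 * Real.exp (z * s) *
        ((∑ i, max (a i) s) - (Fintype.card ι) * s)) ≤ (∫ s in (-R)..R, z ^ 2 * Real.exp (z * s) *
        ((∑ i, max (b i) s) - (Fintype.card ι) * s)) := by
    apply intervalIntegral.integral_mono_on (by linarith)
    · apply Continuous.intervalIntegrable; fun_prop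
    · apply Continuous.intervalIntegrable; fun_prop
    · intro s _
      have := h s
      gcongr
  gcongr

/-- Power sums from the family of truncated determinant inequalities. -/
lemma rpow_sum_le {ι : Type*} [Fintype ι] (x y : ι → ℝ) (hx : ∀ i, 0 < x i) (hy : ∀ i, 0 < y i)
    (z : ℝ) (hz : 0 < z) (h : ∀ t : ℝ, 0 < t → ∏ i, max (x i) t ≤ ∏ i, max (y i) t) :
    ∑ i, x i ^ z ≤ ∑ i, y i ^ z := by
  have := exp_sum_le (fun i => Real.log (x i)) (fun i => Real.log (y i)) z hz (by
    intro s
    have h1 := h (Real.exp s) (Real.exp_pos s)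
    have aux : ∀ w : ι → ℝ, (∀ i, 0 < w i) →
        ∏ i, max (w i) (Real.exp s) = Real.exp (∑ i, max (Real.log (w i)) s) := by
      intro w hw
      rw [Real.exp_sum]
      refine Finset.prod_congr rfl fun i _ => ?_
      rw [Real.exp_monotone.map_max, Real.exp_log (hw i)]
    rw [aux x hx, aux y hy] at h1
    exact Real.exp_le_exp.mp h1)
  simpa [Real.rpow_def_of_pos (hx _), Real.rpow_def_of_pos (hy _), mul_comm] using this

section mats
variable {d : ℕ}

/-- `W diag(x) W*` -/
noncomputable def cdiag (W : Matrix (Fin d) (Fin d) ℂ) (x : Fin d → ℝ) :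
    Matrix (Fin d) (Fin d) ℂ :=
  W * Matrix.diagonal (fun i => ((x i : ℝ) : ℂ)) * star W

lemma cdiag_herm (W : Matrix (Fin d) (Fin d) ℂ) (x : Fin d → ℝ) : (cdiag W x).IsHermitian := by
  unfold cdiag Matrix.IsHermitian
  rw [← Matrix.star_eq_conjTranspose]
  simp only [star_mul, star_star, mul_assoc]
  congr 2
  rw [Matrix.star_eq_conjTranspose, Matrix.diagonal_conjTranspose]
  congr 1
  ext i; simp

lemma cdiag_mul {W : Matrix (Fin d) (Fin d) ℂ} (hW : W ∈ Matrix.unitaryGroup (Fin d) ℂ)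
    (x y : Fin d → ℝ) : cdiag W x * cdiag W y = cdiag W (fun i => x i * y i) := by
  have h : star W * W = 1 := (Matrix.mem_unitaryGroup_iff').mp hW
  unfold cdiag
  calc _ = W * Matrix.diagonal (fun i => ((x i : ℝ) : ℂ)) * (star W * W) *
        Matrix.diagonal (fun i => ((y i : ℝ) : ℂ)) * star W := by noncomm_ring
    _ = _ := by
      rw [h, mul_one, mul_assoc W, Matrix.diagonal_mul_diagonal]
      simp

lemma cdiag_one {W : Matrix (Fin d) (Fin d) ℂ} (hW : W ∈ Matrix.unitaryGroup (Fin d) ℂ) :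
    cdiag W (fun _ => 1) = 1 := by
  have h : W * star W = 1 := (Matrix.mem_unitaryGroup_iff).mp hW
  simp [cdiag, h]

lemma cdiag_smul (W : Matrix (Fin d) (Fin d) ℂ) (x : Fin d → ℝ) (t : ℝ) :
    cdiag W (fun i => t * x i) = (t : ℂ) • cdiag W x := by
  unfold cdiag
  rw [← Matrix.smul_mul, ← Matrix.mul_smul, ← Matrix.diagonal_smul]
  congr 3
  ext i; simp

lemma cdiag_sub (W : Matrix (Fin d) (Fin d) ℂ) (x y : Fin d → ℝ) :
    cdiag W x - cdiag W y = cdiag W (fun i => x i - y i) := by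
  unfold cdiag
  rw [← Matrix.sub_mul, ← Matrix.mul_sub, Matrix.diagonal_sub]
  simp

lemma cdiag_trace {W : Matrix (Fin d) (Fin d) ℂ} (hW : W ∈ Matrix.unitaryGroup (Fin d) ℂ)
    (x : Fin d → ℝ) : (cdiag W x).trace.re = ∑ i, x i := by
  have h : star W * W = 1 := (Matrix.mem_unitaryGroup_iff').mp hW
  unfold cdiag
  rw [Matrix.trace_mul_comm, ← mul_assoc, h, one_mul, Matrix.trace_diagonal]
  simp

lemma cdiag_det {W : Matrix (Fin d) (Fin d) ℂ} (hW : W ∈ Matrix.unitaryGroup (Fin d) ℂ)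
    (x : Fin d → ℝ) : (cdiag W x).det = ((∏ i, x i : ℝ) : ℂ) := by
  have h : star W * W = 1 := (Matrix.mem_unitaryGroup_iff').mp hW
  unfold cdiag
  rw [Matrix.det_mul_comm, ← mul_assoc, h, one_mul, Matrix.det_diagonal]
  simp

lemma cdiag_posSemidef (W : Matrix (Fin d) (Fin d) ℂ)
    (x : Fin d → ℝ) (hx : ∀ i, 0 ≤ x i) : (cdiag W x).PosSemidef := by
  unfold cdiag
  apply Matrix.PosSemidef.mul_mul_conjTranspose_same
  rw [Matrix.posSemidef_diagonal_iff]
  intro i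
  exact_mod_cast hx i

lemma cdiag_conj (U W : Matrix (Fin d) (Fin d) ℂ) (x : Fin d → ℝ) :
    U * cdiag W x * star U = cdiag (U * W) x := by
  unfold cdiag
  simp only [star_mul, mul_assoc]

/-- functional calculus does not depend on the diagonalization -/
lemma cdiag_fun {W V : Matrix (Fin d) (Fin d) ℂ} (hW : W ∈ Matrix.unitaryGroup (Fin d) ℂ)
    (hV : V ∈ Matrix.unitaryGroup (Fin d) ℂ) (x y : Fin d → ℝ) (h : cdiag W x = cdiag V y)
    (f : ℝ → ℝ) : cdiag W (fun i => f (x i)) = cdiag V (fun i => f (y i)) := by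
  have hW1 : star W * W = 1 := (Matrix.mem_unitaryGroup_iff').mp hW
  have hV1 : star V * V = 1 := (Matrix.mem_unitaryGroup_iff').mp hV
  have hW2 : W * star W = 1 := (Matrix.mem_unitaryGroup_iff).mp hW
  have hV2 : V * star V = 1 := (Matrix.mem_unitaryGroup_iff).mp hV
  have h1 : (star V * W) * Matrix.diagonal (fun i => ((x i : ℝ) : ℂ)) =
      Matrix.diagonal (fun i => ((y i : ℝ) : ℂ)) * (star V * W) := by
    have : star V * cdiag W x * W = star V * cdiag V y * W := by rw [h]
    unfold cdiag at this
    calc _ = star V * (W * diagonal (fun i => ((x i : ℝ) : ℂ)) * (star W)) * W := by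
          simp only [mul_assoc, hW1, mul_one]
      _ = _ := by
          rw [this]
          simp only [← mul_assoc, hV1, one_mul]
  have h2 : (star V * W) * Matrix.diagonal (fun i => ((f (x i) : ℝ) : ℂ)) =
      Matrix.diagonal (fun i => ((f (y i) : ℝ) : ℂ)) * (star V * W) := by
    ext i j
    have := congrFun (congrFun h1 i) j
    rw [Matrix.mul_diagonal, Matrix.diagonal_mul] at this ⊢
    by_cases h0 : (star V * W) i j = 0
    · simp [h0]
    · have h3 : ((x j : ℝ) : ℂ) = y i := by
        rw [mul_comm] at this
        exact mul_right_cancel₀ h0 this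
      have h4 : x j = y i := by exact_mod_cast h3
      rw [h4, mul_comm]
  unfold cdiag
  calc _ = (V * star V) * W * diagonal (fun i => ((f (x i) : ℝ) : ℂ)) * star W := by
        rw [hV2, one_mul]
    _ = V * ((star V * W) * diagonal (fun i => ((f (x i) : ℝ) : ℂ))) * star W := by
        simp only [mul_assoc]
    _ = V * diagonal (fun i => ((f (y i) : ℝ) : ℂ)) * star V * (W * star W) := by
        rw [h2]; simp only [mul_assoc]
    _ = _ := by rw [hW2, mul_one]

lemma herm_eq_cdiag {A : Matrix (Fin d) (Fin d) ℂ} (hA : A.IsHermitian) :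
    A = cdiag (hA.eigenvectorUnitary : Matrix (Fin d) (Fin d) ℂ) hA.eigenvalues := by
  have := hA.spectral_theorem
  simpa [cdiag, Unitary.conjStarAlgAut_apply, Function.comp_def] using this

lemma mpow_herm {A : Matrix (Fin d) (Fin d) ℂ} (hA : A.IsHermitian) (t : ℝ) :
    mpow A t = cdiag (hA.eigenvectorUnitary : Matrix (Fin d) (Fin d) ℂ)
      (fun i => hA.eigenvalues i ^ t) := by
  simp [mpow, hA, cdiag]

lemma mpow_cdiag {W : Matrix (Fin d) (Fin d) ℂ} (hW : W ∈ Matrix.unitaryGroup (Fin d) ℂ)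
    (x : Fin d → ℝ) (t : ℝ) : mpow (cdiag W x) t = cdiag W (fun i => x i ^ t) := by
  rw [mpow_herm (cdiag_herm W x)]
  exact cdiag_fun (cdiag_herm W x).eigenvectorUnitary.2 hW _ _
    (herm_eq_cdiag (cdiag_herm W x)).symm (fun s => s ^ t)

lemma cdiag_perm {W : Matrix (Fin d) (Fin d) ℂ} (hW : W ∈ Matrix.unitaryGroup (Fin d) ℂ)
    (x : Fin d → ℝ) (e : Equiv.Perm (Fin d)) :
    ∃ V ∈ Matrix.unitaryGroup (Fin d) ℂ, cdiag W x = cdiag V (x ∘ e) := by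
  have h : W * star W = 1 := (Matrix.mem_unitaryGroup_iff).mp hW
  have hs : star (W.submatrix id e) = (star W).submatrix e id := by
    ext i j; simp [Matrix.star_apply]
  refine ⟨W.submatrix id e, ?_, ?_⟩
  · rw [Matrix.mem_unitaryGroup_iff, hs, Matrix.submatrix_mul_equiv, h]
    simp
  · unfold cdiag
    have : Matrix.diagonal (fun i => (((x ∘ e) i : ℝ) : ℂ)) =
        (Matrix.diagonal (fun i => ((x i : ℝ) : ℂ))).submatrix e e := by
      rw [Matrix.submatrix_diagonal_equiv]; rfl
    rw [hs, this, Matrix.submatrix_mul_equiv, Matrix.submatrix_mul_equiv]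
    simp

lemma eigDown_cdiag {A : Matrix (Fin d) (Fin d) ℂ} (hA : A.IsHermitian) :
    ∃ V ∈ Matrix.unitaryGroup (Fin d) ℂ, A = cdiag V (eigDown hA) := by
  obtain ⟨V, hV, h⟩ := cdiag_perm hA.eigenvectorUnitary.2 hA.eigenvalues
    (Fin.revPerm.trans (Tuple.sort hA.eigenvalues))
  refine ⟨V, hV, ?_⟩
  rw [← herm_eq_cdiag hA] at h
  exact h

lemma eigDown_antitone {A : Matrix (Fin d) (Fin d) ℂ} (hA : A.IsHermitian) :
    Antitone (eigDown hA) := by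
  intro i j hij
  exact Tuple.monotone_sort hA.eigenvalues (Fin.rev_le_rev.mpr hij)

lemma eigDown_pos {A : Matrix (Fin d) (Fin d) ℂ} (hA : A.PosDef) (i : Fin d) :
    0 < eigDown hA.1 i := hA.eigenvalues_pos _

lemma cdiag_quad (V : Matrix (Fin d) (Fin d) ℂ) (x : Fin d → ℝ) (u : Fin d → ℂ) :
    (star u ⬝ᵥ (cdiag V x *ᵥ u)) = ((∑ i, x i * ‖(star V *ᵥ u) i‖ ^ 2 : ℝ) : ℂ) := by
  unfold cdiag
  rw [← Matrix.mulVec_mulVec, ← Matrix.mulVec_mulVec, Matrix.dotProduct_mulVec]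
  have : star u ᵥ* V = star (star V *ᵥ u) := by
    rw [Matrix.star_mulVec]; simp [Matrix.star_eq_conjTranspose]
  rw [this]
  simp only [dotProduct, Matrix.mulVec_diagonal, Pi.star_apply]
  push_cast
  refine Finset.sum_congr rfl fun i _ => ?_
  rw [← Complex.conj_mul']
  simp; ring

/-- Weyl monotonicity. -/
lemma weyl {W V : Matrix (Fin d) (Fin d) ℂ} (hW : W ∈ Matrix.unitaryGroup (Fin d) ℂ)
    (hV : V ∈ Matrix.unitaryGroup (Fin d) ℂ) (x y : Fin d → ℝ) (hx : Antitone x) (hy : Antitone y)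
    (h : (cdiag V y - cdiag W x).PosSemidef) (i : Fin d) : x i ≤ y i := by
  have hW1 : star W * W = 1 := (Matrix.mem_unitaryGroup_iff').mp hW
  set S := star V * W with hS
  let T : Matrix (Fin d) (Fin d) ℂ := fun j k =>
    if j < i then S j k else if i < j then (if j = k then 1 else 0) else 0
  have hT : T.det = 0 := by
    apply Matrix.det_eq_zero_of_row_eq_zero i
    intro k; simp [T]
  obtain ⟨c, hc0, hc⟩ := Matrix.exists_mulVec_eq_zero_iff.mpr hT
  have c1 : ∀ j, i < j → c j = 0 := by
    intro j hj
    have := congrFun hc j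
    simpa [T, Matrix.mulVec, dotProduct, hj, hj.le, not_lt_of_gt hj] using this
  have c2 : ∀ j, j < i → (S *ᵥ c) j = 0 := by
    intro j hj
    have := congrFun hc j
    simpa [T, Matrix.mulVec, dotProduct, hj] using this
  have q := h.dotProduct_mulVec_nonneg (W *ᵥ c)
  rw [Matrix.sub_mulVec, dotProduct_sub, cdiag_quad, cdiag_quad, Matrix.mulVec_mulVec,
    Matrix.mulVec_mulVec, hW1, Matrix.one_mulVec, ← hS] at q
  have q' : ∑ j, x j * ‖c j‖ ^ 2 ≤ ∑ j, y j * ‖(S *ᵥ c) j‖ ^ 2 := by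
    rw [← Complex.ofReal_sub] at q
    have : (0:ℝ) ≤ _ := Complex.zero_le_real.mp q
    linarith
  have nrm : ∑ j, ‖(S *ᵥ c) j‖ ^ 2 = ∑ j, ‖c j‖ ^ 2 := by
    have e1 := cdiag_quad V (fun _ => 1) (W *ᵥ c)
    have e2 := cdiag_quad W (fun _ => 1) (W *ᵥ c)
    rw [cdiag_one hV, Matrix.mulVec_mulVec (M := star V), ← hS] at e1
    rw [cdiag_one hW, e1, Matrix.mulVec_mulVec (M := star W), hW1, Matrix.one_mulVec] at e2
    have e3 := Complex.ofReal_injective e2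
    simpa using e3
  have l1 : x i * ∑ j, ‖c j‖ ^ 2 ≤ ∑ j, x j * ‖c j‖ ^ 2 := by
    rw [Finset.mul_sum]
    refine Finset.sum_le_sum fun j _ => ?_
    rcases lt_or_ge i j with hj | hj
    · simp [c1 j hj]
    · have := hx hj
      gcongr
  have l2 : ∑ j, y j * ‖(S *ᵥ c) j‖ ^ 2 ≤ y i * ∑ j, ‖(S *ᵥ c) j‖ ^ 2 := by
    rw [Finset.mul_sum]
    refine Finset.sum_le_sum fun j _ => ?_
    rcases lt_or_ge j i with hj | hj
    · simp [c2 j hj]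
    · have := hy hj
      gcongr
  have hp : 0 < ∑ j, ‖c j‖ ^ 2 := by
    obtain ⟨j, hj⟩ := Function.ne_iff.mp hc0
    exact Finset.sum_pos' (fun _ _ => by positivity)
      ⟨j, Finset.mem_univ j, by have := norm_pos_iff.mpr hj; positivity⟩
  rw [nrm] at l2
  exact le_of_mul_le_mul_right (l1.trans (q'.trans l2)) hp

lemma core_s4 {W V : Matrix (Fin d) (Fin d) ℂ} (hW : W ∈ Matrix.unitaryGroup (Fin d) ℂ)
    (hV : V ∈ Matrix.unitaryGroup (Fin d) ℂ) (r s : Fin d → ℝ) (hr : Antitone r) (hs : Antitone s)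
    (hr0 : ∀ i, 0 < r i) (hs0 : ∀ i, 0 < s i) (α z : ℝ) (hα : 1 < α) (hz : 0 < z) :
    ∑ i, r i ^ α * s i ^ (1 - α) ≤
      (mpow (mpow (cdiag V s) ((1 - α) / (2 * z)) * mpow (cdiag W r) (α / z) *
        mpow (cdiag V s) ((1 - α) / (2 * z))) z).trace.re := by
  rw [mpow_cdiag hV, mpow_cdiag hW]
  set p : Fin d → ℝ := fun i => s i ^ ((1 - α) / (2 * z)) with hp
  set a : Fin d → ℝ := fun i => r i ^ (α / z) with ha
  have hp0 : ∀ i, 0 < p i := fun i => Real.rpow_pos_of_pos (hs0 i) _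
  have ha0 : ∀ i, 0 < a i := fun i => Real.rpow_pos_of_pos (hr0 i) _
  have ha' : Antitone a := fun i j hij =>
    Real.rpow_le_rpow (hr0 j).le (hr hij) (by positivity)
  set q : Fin d → ℝ := fun i => (p i)⁻¹ with hq
  have hq0 : ∀ i, 0 < q i := fun i => inv_pos.mpr (hp0 i)
  have hqs : ∀ i, q i = s i ^ ((α - 1) / (2 * z)) := fun i => by
    simp only [hq, hp]
    rw [← Real.rpow_neg (hs0 i).le]; congr 1; ring
  set D : Fin d → ℝ := fun i => q i * q i with hD
  have hD0 : ∀ i, 0 < D i := fun i => mul_pos (hq0 i) (hq0 i)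
  have hq' : Antitone q := fun i j hij => by
    rw [hqs, hqs]
    have : 0 ≤ (α - 1) / (2 * z) := div_nonneg (by linarith) (by linarith)
    exact Real.rpow_le_rpow (hs0 j).le (hs hij) this
  have hD' : Antitone D := fun i j hij =>
    mul_le_mul (hq' hij) (hq' hij) (hq0 j).le (hq0 i).le
  set P := cdiag V p with hP
  set Q := cdiag V q with hQ
  have hPQ : P * Q = 1 := by
    rw [hP, hQ, cdiag_mul hV, ← cdiag_one hV]
    congr 1; ext i; exact mul_inv_cancel₀ (hp0 i).ne'
  have hQP : Q * P = 1 := by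
    rw [hP, hQ, cdiag_mul hV, ← cdiag_one hV]
    congr 1; ext i; exact inv_mul_cancel₀ (hp0 i).ne'
  have hPh : star P = P := cdiag_herm V p
  have hQh : star Q = Q := cdiag_herm V q
  have hApd : (cdiag W a).PosDef := by
    have := cdiag_posSemidef W a (fun i => (ha0 i).le)
    refine this.posDef_iff_isUnit.mpr ?_
    rw [Matrix.isUnit_iff_isUnit_det, cdiag_det hW, isUnit_iff_ne_zero]
    exact_mod_cast (Finset.prod_pos fun i _ => ha0 i).ne'
  set C := P * cdiag W a * P with hC
  have hCpd : C.PosDef := by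
    have h1 : C.PosSemidef := by
      have := hApd.posSemidef.mul_mul_conjTranspose_same P
      rwa [← Matrix.star_eq_conjTranspose, hPh] at this
    refine h1.posDef_iff_isUnit.mpr ?_
    have hPu : IsUnit P := ⟨⟨P, Q, hPQ, hQP⟩, rfl⟩
    exact (hPu.mul hApd.isUnit).mul hPu
  have hCq : Q * C * Q = cdiag W a := by
    calc Q * C * Q = (Q * P) * cdiag W a * (P * Q) := by rw [hC]; noncomm_ring
      _ = _ := by rw [hPQ, hQP]; simp
  have hCh := hCpd.1
  set E : Matrix (Fin d) (Fin d) ℂ := (hCh.eigenvectorUnitary : Matrix (Fin d) (Fin d) ℂ) with hE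
  have hEu : E ∈ Matrix.unitaryGroup (Fin d) ℂ := hCh.eigenvectorUnitary.2
  have hCE : C = cdiag E hCh.eigenvalues := herm_eq_cdiag hCh
  rw [mpow_herm hCh, cdiag_trace hEu]
  have fin := rpow_sum_le (fun i => a i / D i) hCh.eigenvalues
    (fun i => div_pos (ha0 i) (hD0 i)) (fun i => hCpd.eigenvalues_pos i) z hz ?_
  · convert fin using 2 with i
    simp only [ha, hD]
    have h1 : q i * q i = s i ^ ((α - 1) / z) := by
      rw [hqs, ← Real.rpow_add (hs0 i)]; congr 1; field_simp; ring
    rw [h1, Real.div_rpow (Real.rpow_pos_of_pos (hr0 i) _).le (Real.rpow_pos_of_pos (hs0 i) _).le,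
      ← Real.rpow_mul (hr0 i).le, ← Real.rpow_mul (hs0 i).le, div_mul_cancel₀ _ hz.ne',
      div_mul_cancel₀ _ hz.ne', div_eq_mul_inv, ← Real.rpow_neg (hs0 i).le]
    congr 2; ring
  intro t ht
  set ct : Fin d → ℝ := fun i => max (hCh.eigenvalues i) t with hct
  set Ct := cdiag E ct with hCt
  set M := Q * Ct * Q with hM
  have conjpos : ∀ X : Matrix (Fin d) (Fin d) ℂ, X.PosSemidef → (Q * X * Q).PosSemidef := by
    intro X hX
    have := hX.mul_mul_conjTranspose_same Q
    rwa [← Matrix.star_eq_conjTranspose, hQh] at this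
  have hMh : M.IsHermitian :=
    (conjpos Ct (cdiag_posSemidef E ct fun i => ht.le.trans (le_max_right _ _))).1
  obtain ⟨Z, hZ, hMZ⟩ := eigDown_cdiag hMh
  have m1 : ∀ i, a i ≤ eigDown hMh i := by
    refine weyl hW hZ a _ ha' (eigDown_antitone hMh) ?_
    rw [← hMZ, ← hCq, hM, ← Matrix.sub_mul, ← Matrix.mul_sub]
    apply conjpos
    rw [hCt, hCE, cdiag_sub]
    exact cdiag_posSemidef _ _ fun i => sub_nonneg.mpr (le_max_left _ _)
  have m2 : ∀ i, t * D i ≤ eigDown hMh i := by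
    refine weyl hV hZ (fun i => t * D i) _ (fun i j hij => mul_le_mul_of_nonneg_left (hD' hij) ht.le)
      (eigDown_antitone hMh) ?_
    have : cdiag V (fun i => t * D i) = Q * cdiag E (fun i => t * 1) * Q := by
      rw [cdiag_smul, cdiag_smul, cdiag_one hEu, hD, ← cdiag_mul hV, ← hQ]
      simp
    rw [← hMZ, this, hM, ← Matrix.sub_mul, ← Matrix.mul_sub]
    apply conjpos
    rw [hCt, cdiag_sub]
    exact cdiag_posSemidef _ _ fun i => by simp [hct]
  have hdet : ∏ i, eigDown hMh i = (∏ i, D i) * ∏ i, ct i := by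
    have h1 : M.det = ((∏ i, eigDown hMh i : ℝ) : ℂ) := by
      conv_lhs => rw [hMZ]
      exact cdiag_det hZ _
    have h2 : M.det = (((∏ i, D i) * ∏ i, ct i : ℝ) : ℂ) := by
      rw [hM, Matrix.det_mul, Matrix.det_mul, hQ, cdiag_det hV, hCt, cdiag_det hEu, hD,
        Finset.prod_mul_distrib]
      push_cast; ring
    exact_mod_cast h1.symm.trans h2
  have hDp : 0 < ∏ i, D i := Finset.prod_pos fun i _ => hD0 i
  refine le_of_mul_le_mul_left ?_ hDp
  rw [← hdet, ← Finset.prod_mul_distrib]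
  refine Finset.prod_le_prod (fun i _ => ?_) (fun i _ => ?_)
  · exact mul_nonneg (hD0 i).le (ht.le.trans (le_max_right _ _))
  · rw [mul_max_of_nonneg _ _ (hD0 i).le, mul_div_cancel₀ _ (hD0 i).ne']
    exact max_le (m1 i) (by rw [mul_comm]; exact m2 i)

end mats

/-- for positive definite density matrices `ρ, σ` and `(α,z)` with
`1 < α ≤ 2, α/2 ≤ z ≤ α` or `2 ≤ α, α−1 ≤ z ≤ α`, the minimum of `F_{α,z}(ρ, UσU*)`
over unitaries is `F_α^C(λ↓(ρ), λ↓(σ))`, attained at a unitary `U` for which `ρ` and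
`UσU*` are simultaneously diagonalized with both eigenvalue lists decreasing. -/
theorem stmt_4 {d : ℕ} (ρ σ : Matrix (Fin d) (Fin d) ℂ)
    (hρ : ρ.PosDef) (hσ : σ.PosDef) (hρ1 : ρ.trace = 1) (hσ1 : σ.trace = 1)
    (α z : ℝ)
    (hαz : (1 < α ∧ α ≤ 2 ∧ α / 2 ≤ z ∧ z ≤ α) ∨ (2 ≤ α ∧ α - 1 ≤ z ∧ z ≤ α)) :
    IsLeast {x : ℝ | ∃ U ∈ Matrix.unitaryGroup (Fin d) ℂ,
        x = Faz ρ (U * σ * star U) α z}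
      (FazC (eigDown hρ.1) (eigDown hσ.1) α) ∧
    ∃ U ∈ Matrix.unitaryGroup (Fin d) ℂ, ∃ W ∈ Matrix.unitaryGroup (Fin d) ℂ,
      Faz ρ (U * σ * star U) α z = FazC (eigDown hρ.1) (eigDown hσ.1) α ∧
      ρ = W * Matrix.diagonal (fun i => ((eigDown hρ.1 i : ℝ) : ℂ)) * star W ∧
      U * σ * star U = W * Matrix.diagonal (fun i => ((eigDown hσ.1 i : ℝ) : ℂ)) * star W := by
  have hα : 1 < α := by rcases hαz with h | h <;> linarith [h.1]
  have hz : 0 < z := by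
    rcases hαz with ⟨h1, h2, h3, h4⟩ | ⟨h1, h2, h3⟩ <;> linarith
  obtain ⟨W, hW, hρW⟩ := eigDown_cdiag hρ.1
  obtain ⟨V, hV, hσV⟩ := eigDown_cdiag hσ.1
  set r := eigDown hρ.1 with hr
  set s := eigDown hσ.1 with hs
  have hr0 : ∀ i, 0 < r i := eigDown_pos hρ
  have hs0 : ∀ i, 0 < s i := eigDown_pos hσ
  have hV1 : star V * V = 1 := (Matrix.mem_unitaryGroup_iff').mp hV
  have hU : W * star V ∈ Matrix.unitaryGroup (Fin d) ℂ :=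
    mul_mem hW (Unitary.star_mem hV)
  have hUσ : (W * star V) * σ * star (W * star V) = cdiag W s := by
    rw [hσV, cdiag_conj, mul_assoc, hV1, mul_one]
  have hval : Faz ρ ((W * star V) * σ * star (W * star V)) α z = FazC r s α := by
    rw [hUσ, hρW]
    unfold Faz FazC
    rw [mpow_cdiag hW, mpow_cdiag hW, cdiag_mul hW, cdiag_mul hW, mpow_cdiag hW, cdiag_trace hW]
    congr 1
    refine Finset.sum_congr rfl fun i _ => ?_
    have p1 := Real.rpow_pos_of_pos (hs0 i) ((1 - α) / (2 * z))
    have p2 := Real.rpow_pos_of_pos (hr0 i) (α / z)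
    rw [Real.mul_rpow (mul_pos p1 p2).le p1.le, Real.mul_rpow p1.le p2.le,
      ← Real.rpow_mul (hs0 i).le, ← Real.rpow_mul (hr0 i).le, div_mul_cancel₀ _ hz.ne',
      mul_comm (s i ^ _) (r i ^ α), mul_assoc, ← Real.rpow_add (hs0 i)]
    congr 2
    field_simp; ring
  refine ⟨⟨⟨_, hU, hval.symm⟩, ?_⟩, _, hU, W, hW, hval, hρW, hUσ⟩
  rintro x ⟨U, hU', rfl⟩
  have hc := core_s4 hW (mul_mem hU' hV) r s (eigDown_antitone _) (eigDown_antitone _) hr0 hs0 α z hα hz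
  rw [← cdiag_conj, ← hσV, ← hρW] at hc
  unfold Faz FazC
  refine Real.rpow_le_rpow ?_ hc (by positivity)
  exact Finset.sum_nonneg fun i _ =>
    mul_nonneg (Real.rpow_pos_of_pos (hr0 i) _).le (Real.rpow_pos_of_pos (hs0 i) _).le
end
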